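/- arXiv:2605.08026 — 2 statements merged into one kernel-verified Lean document; each statement's English description precedes it below -/
import Mathlib

section
/- Let x̄ be a local minimizer of (P) and let d ∈ C(x̄) ∩ 𝕊 be such that MSCQ(d) holds at x̄. Then x̄ is M-stationary in direction d. -/
open Filter Topology Metric Set
open scoped RealInnerProductSpace Pointwise

noncomputable section

/-- Euclidean space `ℝ^n`. -/
abbrev Eu (n : ℕ) := EuclideanSpace ℝ (Fin n)

section Cones

variable {H : Type*} [NormedAddCommGroup H] [InnerProductSpace ℝ H]

/-- Tangent (Bouligand) cone to `Ω` at `x` (empty if `x ∉ Ω`). -/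
def tanCone (Ω : Set H) (x : H) : Set H :=
  {d | x ∈ Ω ∧ ∃ (dk : ℕ → H) (tk : ℕ → ℝ),
    Tendsto dk atTop (𝓝 d) ∧ (∀ k, 0 < tk k) ∧ Tendsto tk atTop (𝓝 0) ∧
    ∀ k, x + tk k • dk k ∈ Ω}

/-- Polar cone of a set. -/
def polarCone (C : Set H) : Set H := {y | ∀ x ∈ C, ⟪x, y⟫ ≤ 0}

/-- Regular (Fréchet) normal cone: polar of the tangent cone (empty if `x ∉ Ω`). -/
def regNormal (Ω : Set H) (x : H) : Set H :=
  {η | x ∈ Ω ∧ η ∈ polarCone (tanCone Ω x)}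

/-- Limiting (Mordukhovich) normal cone (empty if `x ∉ Ω`). -/
def limNormal (Ω : Set H) (x : H) : Set H :=
  {η | x ∈ Ω ∧ ∃ (xk ηk : ℕ → H),
    Tendsto xk atTop (𝓝 x) ∧ Tendsto ηk atTop (𝓝 η) ∧
    ∀ k, ηk k ∈ regNormal Ω (xk k)}

/-- Directional limiting normal cone to `Ω` at `x` in direction `d`. -/
def dirLimNormal (Ω : Set H) (x d : H) : Set H :=
  {η | x ∈ Ω ∧ ∃ (dk : ℕ → H) (tk : ℕ → ℝ) (ηk : ℕ → H),
    Tendsto dk atTop (𝓝 d) ∧ (∀ k, 0 < tk k) ∧ Tendsto tk atTop (𝓝 0) ∧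
    Tendsto ηk atTop (𝓝 η) ∧
    ∀ k, ηk k ∈ regNormal Ω (x + tk k • dk k)}

/-- The pair `(ξ, r)` as an element of the ℓ²-product `H ×₂ ℝ`. -/
def pl2 (ξ : H) (r : ℝ) : WithLp 2 (H × ℝ) := (WithLp.equiv 2 (H × ℝ)).symm (ξ, r)

/-- Epigraph of `φ` as a subset of the ℓ²-product `H ×₂ ℝ`. -/
def epigraphSet (φ : H → ℝ) : Set (WithLp 2 (H × ℝ)) :=
  {p | φ ((WithLp.equiv 2 (H × ℝ)) p).1 ≤ ((WithLp.equiv 2 (H × ℝ)) p).2}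

/-- Limiting subdifferential of `φ` at `x`. -/
def limSubdiff (φ : H → ℝ) (x : H) : Set H :=
  {ξ | pl2 ξ (-1) ∈ limNormal (epigraphSet φ) (pl2 x (φ x))}

/-- Directional limiting subdifferential of `φ` at `x` in direction `d`, where `φd`
denotes the directional derivative `φ'(x; d)`. -/
def dirLimSubdiff (φ : H → ℝ) (x d : H) (φd : ℝ) : Set H :=
  {ξ | pl2 ξ (-1) ∈ dirLimNormal (epigraphSet φ) (pl2 x (φ x)) (pl2 d φd)}

/-- Directional neighborhood `B_{ε,δ}(d)`. -/
def dirNbhd (d : H) (ε δ : ℝ) : Set H :=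
  {y | ‖y‖ ≤ ε ∧ ‖‖d‖ • y - ‖y‖ • d‖ ≤ δ * (‖y‖ * ‖d‖)}

end Cones

section Problem

variable {n l : ℕ}

/-- `F' x d` is the directional derivative of `F` at `x` in direction `d`. -/
def IsDirDeriv (F : Eu n → Eu l) (F' : Eu n → Eu n → Eu l) : Prop :=
  ∀ x d : Eu n,
    Tendsto (fun t : ℝ => t⁻¹ • (F (x + t • d) - F x)) (𝓝[>] (0:ℝ)) (𝓝 (F' x d))

/-- Limiting subdifferential of the scalarization `⟨λ, F⟩` at `x`. -/
def scalSubdiff (F : Eu n → Eu l) (lam : Eu l) (x : Eu n) : Set (Eu n) :=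
  limSubdiff (fun y => ⟪lam, F y⟫) x

/-- Directional limiting subdifferential of `⟨λ, F⟩` at `x` in direction `d`. -/
def scalDirSubdiff (F : Eu n → Eu l) (F' : Eu n → Eu n → Eu l) (lam : Eu l)
    (x d : Eu n) : Set (Eu n) :=
  dirLimSubdiff (fun y => ⟪lam, F y⟫) x d ⟪lam, F' x d⟫

/-- Linearization cone. -/
def linCone (F : Eu n → Eu l) (F' : Eu n → Eu n → Eu l) (Γ : Set (Eu l)) (x : Eu n) :
    Set (Eu n) :=
  {d | F' x d ∈ tanCone Γ (F x)}

/-- Explicit critical cone `C(x̄)`. -/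
def critCone (f : Eu n → ℝ) (F : Eu n → Eu l) (F' : Eu n → Eu n → Eu l)
    (Γ : Set (Eu l)) (x : Eu n) : Set (Eu n) :=
  {d | ⟪gradient f x, d⟫ ≤ 0 ∧ d ∈ linCone F F' Γ x}

/-- Implicit critical cone `Ĉ(x̄)`. -/
def implCritCone (f : Eu n → ℝ) (F : Eu n → Eu l) (Γ : Set (Eu l)) (x : Eu n) :
    Set (Eu n) :=
  {d | ⟪gradient f x, d⟫ ≤ 0 ∧ d ∈ tanCone (F ⁻¹' Γ) x}

/-- M-stationarity. -/
def MStat (f : Eu n → ℝ) (F : Eu n → Eu l) (Γ : Set (Eu l)) (x : Eu n) : Prop :=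
  ∃ lam : Eu l, -gradient f x ∈ scalSubdiff F lam x ∧ lam ∈ limNormal Γ (F x)

/-- M-stationarity in direction `d`. -/
def MStatDir (f : Eu n → ℝ) (F : Eu n → Eu l) (F' : Eu n → Eu n → Eu l)
    (Γ : Set (Eu l)) (x d : Eu n) : Prop :=
  ∃ lam : Eu l, -gradient f x ∈ scalDirSubdiff F F' lam x d ∧
    lam ∈ dirLimNormal Γ (F x) (F' x d)

/-- Metric subregularity constraint qualification in direction `d`. -/
def MSCQdir (F : Eu n → Eu l) (Γ : Set (Eu l)) (x d : Eu n) : Prop :=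
  ∃ ε > (0:ℝ), ∃ δ > (0:ℝ), ∃ κ > (0:ℝ), ∀ y : Eu n, y - x ∈ dirNbhd d ε δ →
    infDist y (F ⁻¹' Γ) ≤ κ * infDist (F y) Γ

/-- Metric subregularity constraint qualification. -/
def MSCQ (F : Eu n → Eu l) (Γ : Set (Eu l)) (x : Eu n) : Prop := MSCQdir F Γ x 0

/-- AM-stationary sequence w.r.t. `x`. -/
def AMSeq (f : Eu n → ℝ) (F : Eu n → Eu l) (Γ : Set (Eu l)) (x : Eu n)
    (xk : ℕ → Eu n) (lamk δk : ℕ → Eu l) (εk : ℕ → Eu n) : Prop :=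
  (∀ k, εk k - gradient f (xk k) ∈ scalSubdiff F (lamk k) (xk k)) ∧
  (∀ k, lamk k ∈ limNormal Γ (F (xk k) - δk k)) ∧
  Tendsto xk atTop (𝓝 x) ∧ Tendsto δk atTop (𝓝 0) ∧ Tendsto εk atTop (𝓝 0)

/-- AM-stationarity. -/
def AMStat (f : Eu n → ℝ) (F : Eu n → Eu l) (Γ : Set (Eu l)) (x : Eu n) : Prop :=
  ∃ xk lamk δk εk, AMSeq f F Γ x xk lamk δk εk

/-- AM-stationary sequence w.r.t. `x` in direction `d`. -/
def AMSeqDir (f : Eu n → ℝ) (F : Eu n → Eu l) (Γ : Set (Eu l)) (x : Eu n)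
    (xk : ℕ → Eu n) (lamk δk : ℕ → Eu l) (εk : ℕ → Eu n) (d : Eu n) : Prop :=
  AMSeq f F Γ x xk lamk δk εk ∧
  (∀ k, xk k ≠ x) ∧
  Tendsto (fun k => ‖xk k - x‖⁻¹ • (xk k - x)) atTop (𝓝 d) ∧
  Tendsto (fun k => ‖xk k - x‖⁻¹ • δk k) atTop (𝓝 (0 : Eu l)) ∧
  (∃ θ : ℕ → ℝ, (∀ k, 0 ≤ θ k) ∧ Tendsto θ atTop (𝓝 0) ∧
    ∀ k, ‖‖δk k‖ • lamk k - ‖lamk k‖ • δk k‖ ≤ ‖δk k‖ * ‖lamk k‖ * θ k) ∧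
  (∃ M : ℝ, ∀ k, ‖δk k‖ * ‖lamk k‖ / ‖xk k - x‖ ≤ M)

/-- AM-stationarity in direction `d`. -/
def AMStatDir (f : Eu n → ℝ) (F : Eu n → Eu l) (Γ : Set (Eu l)) (x d : Eu n) : Prop :=
  ∃ xk lamk δk εk, AMSeqDir f F Γ x xk lamk δk εk d

/-- The Minkowski sum `Σ_i |λ_i| ∂(sgn(λ_i) F_i)(x; d)`. -/
def dirSumSet (F : Eu n → Eu l) (F' : Eu n → Eu n → Eu l) (lam : Eu l) (x d : Eu n) :
    Set (Eu n) :=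
  {v | ∃ s : Fin l → Eu n,
    (∀ i, s i ∈ |lam i| • dirLimSubdiff (fun y => Real.sign (lam i) * F y i) x d
        (Real.sign (lam i) * F' x d i)) ∧
    v = ∑ i, s i}

/-- Standing sum-rule assumption. -/
def SumRule (F : Eu n → Eu l) (F' : Eu n → Eu n → Eu l) : Prop :=
  ∀ (x d : Eu n) (lam : Eu l), scalDirSubdiff F F' lam x d = dirSumSet F F' lam x d

end Problem

/-!
For `t ↓ 0` and a fixed `M`, minimize over a ball around `x + t d` of radius proportional to `t`
the quadratic penalty
`(M / t) dist(F y, Γ)² + ⟪∇f x, y⟫ + (1 / t) ‖y - (x + t d)‖²`.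
Local optimality of `x` together with metric subregularity in direction `d` makes
`y ↦ ⟪∇f x, y - x⟫ + C dist(F y, Γ)` bounded below by `-o(t)` on these balls. Since `d` is critical,
`x + t d` is nearly optimal for the penalty for infinitely many small `t`, so the minimizer `y`
satisfies `M dist(F y, Γ) = O(t)` and `√M ‖y - (x + t d)‖ = O(t)` with constants independent of `M`.
Hence `y` is interior for large `M`, and with a projection `z` of `F y` on `Γ` the multiplier
`(2 M / t) (F y - z)` is bounded, is normal to `Γ` at `z`, and satisfies the stationarity condition
up to an error `O(1 / √M)`. Letting `M → ∞` along a diagonal sequence gives the limiting multiplier.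
The multiplier still varies along this sequence; a proximal subgradient of `⟪λ, F⟫` is exchanged
for one of `⟪λ', F⟫` at a nearby point at a cost proportional to `‖λ - λ'‖`.
-/

section DirectionalDerivatives

lemma eventually_fst_pos {X : Type*} [TopologicalSpace X] (d : X) :
    ∀ᶠ p : ℝ × X in 𝓝[>] 0 ×ˢ 𝓝 d, 0 < p.1 :=
  Eventually.prod_inl (p := fun t : ℝ => 0 < t) self_mem_nhdsWithin _

variable {X Y : Type*} [NormedAddCommGroup X] [NormedSpace ℝ X] [NormedAddCommGroup Y]
  [NormedSpace ℝ Y] {F : X → Y} {x d : X} {v : Y}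

/-- One-sided directional derivative: `F'(x; d) = v`. -/
def HasDirDerivAt (F : X → Y) (v : Y) (x d : X) : Prop :=
  Tendsto (fun t : ℝ => t⁻¹ • (F (x + t • d) - F x)) (𝓝[>] 0) (𝓝 v)

/-- One-sided directional derivative in the sense of Hadamard, where the direction may vary
together with the step length. -/
def HasHadamardDirDerivAt (F : X → Y) (v : Y) (x d : X) : Prop :=
  Tendsto (fun p : ℝ × X => p.1⁻¹ • (F (x + p.1 • p.2) - F x)) (𝓝[>] 0 ×ˢ 𝓝 d) (𝓝 v)

lemma tendsto_add_smul_nhdsGT_prod (x d : X) :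
    Tendsto (fun p : ℝ × X => x + p.1 • p.2) (𝓝[>] 0 ×ˢ 𝓝 d) (𝓝 x) := by
  have hfst : Tendsto Prod.fst ((𝓝[>] (0 : ℝ)) ×ˢ 𝓝 d) (𝓝 0) :=
    tendsto_fst.mono_right nhdsWithin_le_nhds
  simpa using (hfst.smul tendsto_snd).const_add x

lemma HasDirDerivAt.hasHadamardDirDerivAt (hv : HasDirDerivAt F v x d) {K : NNReal} {U : Set X}
    (hF : LipschitzOnWith K F U) (hU : U ∈ 𝓝 x) : HasHadamardDirDerivAt F v x d := by
  have hline : Tendsto (fun p : ℝ × X => x + p.1 • d) (𝓝[>] 0 ×ˢ 𝓝 d) (𝓝 x) :=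
    (tendsto_add_smul_nhdsGT_prod x d).comp (tendsto_fst.prodMk tendsto_const_nhds)
  have hdir : Tendsto (fun p : ℝ × X => K * ‖p.2 - d‖) (𝓝[>] 0 ×ˢ 𝓝 d) (𝓝 0) := by
    have : Tendsto (fun p : ℝ × X => ‖p.2 - d‖) (𝓝[>] 0 ×ˢ 𝓝 d) (𝓝 ‖d - d‖) :=
      (tendsto_snd.sub_const d).norm
    simpa using this.const_mul (K : ℝ)
  have hvary : Tendsto (fun p : ℝ × X => p.1⁻¹ • (F (x + p.1 • p.2) - F (x + p.1 • d)))
      (𝓝[>] 0 ×ˢ 𝓝 d) (𝓝 0) := by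
    refine squeeze_zero_norm' ?_ hdir
    filter_upwards [(tendsto_add_smul_nhdsGT_prod x d).eventually hU, hline.eventually hU,
      eventually_fst_pos d] with p hpU hlU hp
    have hLip := hF.norm_sub_le hpU hlU
    rw [add_sub_add_left_eq_sub, ← smul_sub, norm_smul, Real.norm_of_nonneg hp.le] at hLip
    rw [norm_smul, Real.norm_of_nonneg (inv_pos.2 hp).le, inv_mul_le_iff₀ hp]
    linarith
  have hsum := (Tendsto.comp hv tendsto_fst).add hvary
  rw [add_zero] at hsum
  refine hsum.congr fun p => ?_
  rw [Function.comp_apply, ← smul_add, add_comm, sub_add_sub_cancel]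

end DirectionalDerivatives

section DirectionalNeighborhoods

lemma eventually_smul_mem_dirNbhd {X : Type*} [NormedAddCommGroup X] [InnerProductSpace ℝ X]
    (d : X) {ε δ : ℝ} (hε : 0 < ε) (hδ : 0 < δ) :
    ∀ᶠ p : ℝ × X in 𝓝[>] 0 ×ˢ 𝓝 d, p.1 • p.2 ∈ dirNbhd d ε δ := by
  have hnorm : ∀ᶠ p : ℝ × X in 𝓝[>] 0 ×ˢ 𝓝 d, ‖p.1 • p.2‖ ≤ ε := by
    have := (tendsto_add_smul_nhdsGT_prod 0 d).norm.eventually_le_const (u := ε) (by simpa)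
    simpa using this
  have hangle : ∀ᶠ w in 𝓝 d, ‖‖d‖ • w - ‖w‖ • d‖ ≤ δ * (‖w‖ * ‖d‖) := by
    rcases eq_or_ne d 0 with rfl | hd
    · simp
    · have : ‖‖d‖ • d - ‖d‖ • d‖ < δ * (‖d‖ * ‖d‖) := by
        rw [sub_self, norm_zero]
        positivity
      exact (ContinuousAt.eventually_lt (by fun_prop) (by fun_prop) this).mono fun _ => le_of_lt
  filter_upwards [hnorm, hangle.prod_inr _, eventually_fst_pos d] with p hpε hpδ hp
  refine ⟨hpε, ?_⟩
  rw [norm_smul, Real.norm_of_nonneg hp.le, smul_comm, mul_smul, ← smul_sub, norm_smul,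
    Real.norm_of_nonneg hp.le]
  calc p.1 * ‖‖d‖ • p.2 - ‖p.2‖ • d‖ ≤ p.1 * (δ * (‖p.2‖ * ‖d‖)) := by gcongr
    _ = δ * (p.1 * ‖p.2‖ * ‖d‖) := by ring

variable {X Y : Type*} [NormedAddCommGroup X] [NormedSpace ℝ X] {x d : X}

/-- Metric subregularity in direction `d` of the feasibility mapping `x ↦ F x - Γ`, expressed
through points `x + t w` with `t ↓ 0` and `w → d` instead of directional neighborhoods. -/
def IsMetricSubregularInDir [PseudoMetricSpace Y] (F : X → Y) (Γ : Set Y) (x d : X) : Prop :=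
  ∃ κ > 0, ∀ᶠ p : ℝ × X in 𝓝[>] 0 ×ˢ 𝓝 d,
    infDist (x + p.1 • p.2) (F ⁻¹' Γ) ≤ κ * infDist (F (x + p.1 • p.2)) Γ

lemma MSCQdir.isMetricSubregularInDir {n l : ℕ} {F : Eu n → Eu l} {Γ : Set (Eu l)} {x d : Eu n}
    (h : MSCQdir F Γ x d) : IsMetricSubregularInDir F Γ x d := by
  obtain ⟨ε, hε, δ, hδ, κ, hκ, h⟩ := h
  refine ⟨κ, hκ, ?_⟩
  filter_upwards [eventually_smul_mem_dirNbhd d hε hδ] with p hp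
  exact h _ (by rwa [add_sub_cancel_left])

lemma norm_sub_le_of_mem_closedBall_add_smul {t r : ℝ} (ht : 0 ≤ t) {y : X}
    (hy : y ∈ closedBall (x + t • d) (r * t)) : ‖y - x‖ ≤ (‖d‖ + r) * t := by
  rw [mem_closedBall_iff_norm] at hy
  calc ‖y - x‖ = ‖(y - (x + t • d)) + t • d‖ := by congr 1; abel
    _ ≤ r * t + ‖t • d‖ := (norm_add_le _ _).trans (by gcongr)
    _ = (‖d‖ + r) * t := by rw [norm_smul, Real.norm_of_nonneg ht]; ring

lemma eventually_forall_mem_closedBall_of_nhds {P : X → Prop} (h : ∀ᶠ y in 𝓝 x, P y) (d : X)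
    (r : ℝ) : ∀ᶠ t in 𝓝[>] (0 : ℝ), ∀ y ∈ closedBall (x + t • d) (r * t), P y := by
  obtain ⟨ρ, hρ, hball⟩ := Metric.eventually_nhds_iff_ball.1 h
  have hsmall : Tendsto (fun t : ℝ => (‖d‖ + r) * t) (𝓝[>] 0) (𝓝 0) := by
    have : Tendsto (fun t : ℝ => (‖d‖ + r) * t) (𝓝 0) (𝓝 ((‖d‖ + r) * 0)) :=
      tendsto_id.const_mul _
    rw [mul_zero] at this
    exact this.mono_left nhdsWithin_le_nhds
  filter_upwards [self_mem_nhdsWithin, hsmall.eventually_lt_const hρ] with t ht htρ y hy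
  refine hball y (mem_ball_iff_norm.2 ?_)
  exact (norm_sub_le_of_mem_closedBall_add_smul (le_of_lt ht) hy).trans_lt htρ

lemma exists_forall_mem_closedBall_of_nhdsGT_prod {P : X → Prop}
    (h : ∀ᶠ p : ℝ × X in 𝓝[>] 0 ×ˢ 𝓝 d, P (x + p.1 • p.2)) :
    ∃ r > 0, ∀ᶠ t in 𝓝[>] (0 : ℝ), ∀ y ∈ closedBall (x + t • d) (r * t), P y := by
  obtain ⟨Q, hQ, R, hR, hQR⟩ := eventually_prod_iff.1 h
  obtain ⟨r, hr, hball⟩ := Metric.nhds_basis_closedBall.eventually_iff.1 hR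
  refine ⟨r, hr, ?_⟩
  filter_upwards [hQ, self_mem_nhdsWithin] with t htQ (ht : 0 < t) y hy
  have hw : t⁻¹ • (y - x) ∈ closedBall d r := by
    rw [mem_closedBall_iff_norm] at hy ⊢
    have : t⁻¹ • (y - x) - d = t⁻¹ • (y - (x + t • d)) := by
      rw [← sub_sub, smul_sub _ (y - x), inv_smul_smul₀ ht.ne']
    rwa [this, norm_smul, Real.norm_of_nonneg (inv_pos.2 ht).le, inv_mul_le_iff₀ ht, mul_comm]
  simpa [smul_inv_smul₀ ht.ne'] using hQR htQ (hball hw)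

end DirectionalNeighborhoods

section ProximalSubgradients

variable {X Y : Type*} [NormedAddCommGroup X] [InnerProductSpace ℝ X] [NormedAddCommGroup Y]
  [InnerProductSpace ℝ Y] {φ ψ : X → ℝ} {ξ x : X}

/-- Proximal subgradients: `ξ` supports `φ` at `x` up to a quadratic error. -/
def IsProximalSubgradient (φ : X → ℝ) (ξ x : X) : Prop :=
  ∃ c : ℝ, ∀ᶠ y in 𝓝 x, φ x + ⟪ξ, y - x⟫ ≤ φ y + c * ‖y - x‖ ^ 2

lemma isProximalSubgradient_of_isLocalMin {p : X} {c : ℝ}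
    (h : IsLocalMin (fun y => φ y - ⟪ξ, y⟫ + c * ‖y - p‖ ^ 2) x) :
    IsProximalSubgradient φ (ξ - (2 * c) • (x - p)) x := by
  refine ⟨c, h.mono fun y hy => ?_⟩
  have hexp : ‖y - p‖ ^ 2 = ‖x - p‖ ^ 2 + 2 * ⟪x - p, y - x⟫ + ‖y - x‖ ^ 2 := by
    rw [← norm_add_sq_real, sub_add_sub_cancel']
  rw [inner_sub_left, real_inner_smul_left, inner_sub_right ξ]
  simp only [hexp] at hy
  linarith

lemma IsProximalSubgradient.pl2_mem_regNormal (h : IsProximalSubgradient φ ξ x) :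
    pl2 ξ (-1) ∈ regNormal (epigraphSet φ) (pl2 x (φ x)) := by
  obtain ⟨c, hc⟩ := h
  refine ⟨le_refl (φ x), ?_⟩
  rintro e ⟨-, e', t, he', ht, ht0, hmem⟩
  have hfst : Tendsto (fun k => (e' k).ofLp.1) atTop (𝓝 e.ofLp.1) :=
    ((WithLp.prod_continuous_ofLp 2 X ℝ).fst.tendsto e).comp he'
  have hsnd : Tendsto (fun k => (e' k).ofLp.2) atTop (𝓝 e.ofLp.2) :=
    ((WithLp.prod_continuous_ofLp 2 X ℝ).snd.tendsto e).comp he'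
  have hpt : Tendsto (fun k => x + t k • (e' k).ofLp.1) atTop (𝓝 x) := by
    simpa using (ht0.smul hfst).const_add x
  have hquot : ∀ᶠ k in atTop,
      ⟪ξ, (e' k).ofLp.1⟫ ≤ (e' k).ofLp.2 + c * (t k * ‖(e' k).ofLp.1‖ ^ 2) := by
    filter_upwards [hpt.eventually hc] with k hk
    have hepi : φ (x + t k • (e' k).ofLp.1) ≤ φ x + t k * (e' k).ofLp.2 := hmem k
    rw [add_sub_cancel_left, inner_smul_right, norm_smul, Real.norm_of_nonneg (ht k).le] at hk
    refine le_of_mul_le_mul_left ?_ (ht k)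
    linarith
  have hlim : ⟪ξ, e.ofLp.1⟫ ≤ e.ofLp.2 + c * (0 * ‖e.ofLp.1‖ ^ 2) :=
    le_of_tendsto_of_tendsto (tendsto_const_nhds.inner hfst)
      (hsnd.add ((ht0.mul (hfst.norm.pow 2)).const_mul c)) hquot
  have hinner : ⟪e, pl2 ξ (-1)⟫ = ⟪e.ofLp.1, ξ⟫ - e.ofLp.2 := by
    simp [pl2, WithLp.prod_inner_apply, sub_eq_add_neg]
  rw [hinner, real_inner_comm]
  linarith

lemma IsProximalSubgradient.inner_of_sq_infDist {Γ : Set Y} {F : X → Y} {K : NNReal} {U : Set X}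
    (hF : LipschitzOnWith K F U) (hU : U ∈ 𝓝 x) {a : ℝ} (ha : 0 ≤ a) {z : Y} (hz : z ∈ Γ)
    (hxz : infDist (F x) Γ = dist (F x) z)
    (h : IsProximalSubgradient (fun y => a * infDist (F y) Γ ^ 2) ξ x) :
    IsProximalSubgradient (fun y => ⟪(2 * a) • (F x - z), F y⟫) ξ x := by
  obtain ⟨c, hc⟩ := h
  refine ⟨c + a * K ^ 2, ?_⟩
  filter_upwards [hc, hU] with y hy hyU
  have hdist : infDist (F y) Γ ^ 2 ≤ ‖F y - z‖ ^ 2 := by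
    rw [← dist_eq_norm]
    gcongr
    exacts [infDist_nonneg, infDist_le_dist_of_mem hz]
  have hexp : ‖F y - z‖ ^ 2 =
      ‖F x - z‖ ^ 2 + 2 * ⟪F x - z, F y - F x⟫ + ‖F y - F x‖ ^ 2 := by
    rw [← norm_add_sq_real, sub_add_sub_cancel']
  have hLip : ‖F y - F x‖ ^ 2 ≤ K ^ 2 * ‖y - x‖ ^ 2 := by
    rw [← mul_pow]
    gcongr
    exact hF.norm_sub_le hyU (mem_of_mem_nhds hU)
  have hbound : a * infDist (F y) Γ ^ 2 ≤
      a * (‖F x - z‖ ^ 2 + 2 * ⟪F x - z, F y - F x⟫ + K ^ 2 * ‖y - x‖ ^ 2) := by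
    gcongr
    linarith
  rw [hxz, dist_eq_norm] at hy
  rw [inner_sub_right] at hbound
  simp only [real_inner_smul_left]
  linarith

-- Minimizing `ψ - ⟪ξ, ·⟫ + c ‖· - x‖²` over a small ball with `c` so large that the minimizer
-- cannot reach the boundary trades the linear error for a proximal subgradient at a nearby point.
lemma exists_isProximalSubgradient_near [ProperSpace X] {ε τ : ℝ} (hε : 0 < ε) (hτ : 0 < τ)
    (hψ : ∀ᶠ y in 𝓝 x, ContinuousAt ψ y)
    (h : ∀ᶠ y in 𝓝 x, ψ x + ⟪ξ, y - x⟫ ≤ ψ y + ε * ‖y - x‖) :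
    ∃ x' ξ', ‖x' - x‖ ≤ τ ∧ ‖ξ' - ξ‖ ≤ 2 * ε ∧ IsProximalSubgradient ψ ξ' x' := by
  obtain ⟨r, hr, hball⟩ := Metric.nhds_basis_closedBall.eventually_iff.1 (hψ.and h)
  obtain ⟨s, hs, hsτ, hsr⟩ : ∃ s > 0, s ≤ τ ∧ s ≤ r :=
    ⟨min τ r, lt_min hτ hr, min_le_left _ _, min_le_right _ _⟩
  have hsub : closedBall x s ⊆ closedBall x r := closedBall_subset_closedBall hsr
  have hcont : ContinuousOn (fun y => ψ y - ⟪ξ, y⟫ + 2 * ε / s * ‖y - x‖ ^ 2) (closedBall x s) := by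
    have : ContinuousOn ψ (closedBall x s) := fun y hy =>
      (hball (hsub hy)).1.continuousWithinAt
    fun_prop
  obtain ⟨x', hx', hmin⟩ :=
    (isCompact_closedBall x s).exists_isMinOn ⟨x, mem_closedBall_self hs.le⟩ hcont
  have hnear : ‖x' - x‖ ≤ s / 2 := by
    have hx'x : ψ x' - ⟪ξ, x'⟫ + 2 * ε / s * ‖x' - x‖ ^ 2 ≤ ψ x - ⟪ξ, x⟫ := by
      simpa using hmin (mem_closedBall_self hs.le)
    have hsupp := (hball (hsub hx')).2
    rw [inner_sub_right] at hsupp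
    have hquad : 2 * ε / s * ‖x' - x‖ ^ 2 ≤ ε * ‖x' - x‖ := by linarith
    rw [div_mul_eq_mul_div, div_le_iff₀ hs] at hquad
    by_contra! hfar
    nlinarith [mul_pos hε (half_pos hs |>.trans hfar)]
  have hint : x' ∈ ball x s := mem_ball_iff_norm.2 (by linarith)
  refine ⟨x', ξ - (2 * (2 * ε / s)) • (x' - x), by linarith, ?_,
    isProximalSubgradient_of_isLocalMin (hmin.isLocalMin (closedBall_mem_nhds_of_mem hint))⟩
  rw [sub_sub_cancel_left, norm_neg, norm_smul, Real.norm_of_nonneg (by positivity)]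
  calc 2 * (2 * ε / s) * ‖x' - x‖ ≤ 2 * (2 * ε / s) * (s / 2) := by gcongr
    _ = 2 * ε := by field_simp

lemma IsProximalSubgradient.exists_near_of_inner [ProperSpace X] {F : X → Y} {K : NNReal}
    {U : Set X} (hF : LipschitzOnWith K F U) (hU : U ∈ 𝓝 x) {lam : Y}
    (h : IsProximalSubgradient (fun y => ⟪lam, F y⟫) ξ x) (lam' : Y) {τ : ℝ} (hτ : 0 < τ) :
    ∃ x' ξ', ‖x' - x‖ ≤ τ ∧ ‖ξ' - ξ‖ ≤ 2 * (K * ‖lam - lam'‖ + τ) ∧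
      IsProximalSubgradient (fun y => ⟪lam', F y⟫) ξ' x' := by
  have hcont : ∀ᶠ y in 𝓝 x, ContinuousAt (fun y => ⟪lam', F y⟫) y := by
    filter_upwards [eventually_mem_nhds_iff.2 hU] with y hy
    exact continuousAt_const.inner (hF.continuousOn.continuousAt hy)
  refine exists_isProximalSubgradient_near (by positivity) hτ hcont ?_
  obtain ⟨c, hc⟩ := h
  have hquad : ∀ᶠ y in 𝓝 x, c * ‖y - x‖ < τ :=
    ContinuousAt.eventually_lt (by fun_prop) continuousAt_const (by simpa)
  filter_upwards [hc, hquad, hU] with y hy hyτ hyU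
  have hLip : ⟪lam - lam', F y - F x⟫ ≤ ‖lam - lam'‖ * (K * ‖y - x‖) :=
    (real_inner_le_norm _ _).trans <| by
      gcongr
      exact hF.norm_sub_le hyU (mem_of_mem_nhds hU)
  have hsq : c * ‖y - x‖ ^ 2 ≤ τ * ‖y - x‖ := by
    rw [sq, ← mul_assoc]
    gcongr
  simp only [inner_sub_left, inner_sub_right] at hLip hy ⊢
  linarith

end ProximalSubgradients

section DirectionalLimits

lemma HasHadamardDirDerivAt.inner_left {X Y : Type*} [NormedAddCommGroup X] [NormedSpace ℝ X]
    [NormedAddCommGroup Y] [InnerProductSpace ℝ Y] {F : X → Y} {v : Y} {x d : X}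
    (h : HasHadamardDirDerivAt F v x d) (lam : Y) :
    HasHadamardDirDerivAt (fun y => ⟪lam, F y⟫) ⟪lam, v⟫ x d := by
  refine (tendsto_const_nhds.inner h).congr fun p => ?_
  rw [real_inner_smul_right, inner_sub_right, smul_eq_mul]

lemma tendsto_pl2 {α X : Type*} [NormedAddCommGroup X] {l : Filter α} {u : α → X} {x : X}
    {a : α → ℝ} {r : ℝ} (hu : Tendsto u l (𝓝 x)) (ha : Tendsto a l (𝓝 r)) :
    Tendsto (fun k => pl2 (u k) (a k)) l (𝓝 (pl2 x r)) :=
  ((WithLp.prod_continuous_toLp 2 X ℝ).tendsto (x, r)).comp (hu.prodMk_nhds ha)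

variable {X Y : Type*} [NormedAddCommGroup X] [InnerProductSpace ℝ X] [NormedAddCommGroup Y]
  [InnerProductSpace ℝ Y] {x d ζ : X} {t : ℕ → ℝ} {w ξ : ℕ → X}

lemma mem_dirLimSubdiff_of_tendsto {φ : X → ℝ} {φd : ℝ} (hφ : HasHadamardDirDerivAt φ φd x d)
    (ht : ∀ k, 0 < t k) (ht0 : Tendsto t atTop (𝓝 0)) (hw : Tendsto w atTop (𝓝 d))
    (hξ : Tendsto ξ atTop (𝓝 ζ)) (h : ∀ k, IsProximalSubgradient φ (ξ k) (x + t k • w k)) :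
    ζ ∈ dirLimSubdiff φ x d φd := by
  have hquot : Tendsto (fun k => (t k)⁻¹ • (φ (x + t k • w k) - φ x)) atTop (𝓝 φd) :=
    Tendsto.comp hφ ((tendsto_nhdsWithin_iff.2 ⟨ht0, .of_forall ht⟩).prodMk hw)
  refine ⟨le_refl (φ x), _, t, _, tendsto_pl2 hw hquot, ht, ht0,
    tendsto_pl2 hξ tendsto_const_nhds, fun k => ?_⟩
  have hpoint : pl2 x (φ x) + t k • pl2 (w k) ((t k)⁻¹ • (φ (x + t k • w k) - φ x)) =
      pl2 (x + t k • w k) (φ x + t k • (t k)⁻¹ • (φ (x + t k • w k) - φ x)) := rfl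
  rw [hpoint, smul_inv_smul₀ (ht k).ne', add_sub_cancel]
  exact (h k).pl2_mem_regNormal

lemma mem_dirLimSubdiff_inner_of_tendsto [ProperSpace X] {F : X → Y} {v : Y} {K : NNReal}
    {U : Set X} (hF : LipschitzOnWith K F U) (hU : U ∈ 𝓝 x) (hv : HasHadamardDirDerivAt F v x d)
    {lam : ℕ → Y} {lam' : Y} (ht : ∀ k, 0 < t k) (ht0 : Tendsto t atTop (𝓝 0))
    (hw : Tendsto w atTop (𝓝 d)) (hlam : Tendsto lam atTop (𝓝 lam'))
    (hξ : Tendsto ξ atTop (𝓝 ζ))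
    (h : ∀ k, IsProximalSubgradient (fun y => ⟪lam k, F y⟫) (ξ k) (x + t k • w k)) :
    ζ ∈ dirLimSubdiff (fun y => ⟪lam', F y⟫) x d ⟪lam', v⟫ := by
  have hpoint : Tendsto (fun k => x + t k • w k) atTop (𝓝 x) := by
    simpa using (ht0.smul hw).const_add x
  obtain ⟨N, hN⟩ := eventually_atTop.1 (hpoint.eventually (eventually_mem_nhds_iff.2 hU))
  choose x' ξ' hx' hξ' hprox using fun k => (h (k + N)).exists_near_of_inner hF
    (hN (k + N) (Nat.le_add_left N k)) lam' (pow_pos (ht (k + N)) 2)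
  have hshift : Tendsto (· + N) atTop atTop := tendsto_add_atTop_nat N
  have ht0N := ht0.comp hshift
  have hx'w : ∀ k, ‖(t (k + N))⁻¹ • (x' k - x) - w (k + N)‖ ≤ t (k + N) := fun k => by
    have hk : (t (k + N))⁻¹ • (x' k - x) - w (k + N) =
        (t (k + N))⁻¹ • (x' k - (x + t (k + N) • w (k + N))) := by
      rw [← sub_sub, smul_sub _ (x' k - x), inv_smul_smul₀ (ht _).ne']
    rw [hk, norm_smul, Real.norm_of_nonneg (inv_pos.2 (ht _)).le, inv_mul_le_iff₀ (ht _), ← sq]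
    exact hx' k
  have hw' : Tendsto (fun k => (t (k + N))⁻¹ • (x' k - x)) atTop (𝓝 d) := by
    simpa using (squeeze_zero_norm hx'w ht0N).add (hw.comp hshift)
  have herr : Tendsto (fun k => 2 * (K * ‖lam (k + N) - lam'‖ + t (k + N) ^ 2)) atTop (𝓝 0) := by
    have := (((hlam.comp hshift).sub_const lam').norm.const_mul (K : ℝ)).add (ht0N.pow 2)
    simpa using this.const_mul 2
  have hξ'ζ : Tendsto ξ' atTop (𝓝 ζ) := by
    simpa using (squeeze_zero_norm hξ' herr).add (hξ.comp hshift)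
  refine mem_dirLimSubdiff_of_tendsto (hv.inner_left lam') (fun k => ht (k + N)) ht0N hw' hξ'ζ
    fun k => ?_
  rw [smul_inv_smul₀ (ht _).ne', add_sub_cancel]
  exact hprox k

end DirectionalLimits

section NormalEstimates

lemma smul_sub_mem_regNormal {Y : Type*} [NormedAddCommGroup Y] [InnerProductSpace ℝ Y]
    {Γ : Set Y} {z y : Y} (hz : z ∈ Γ) (hyz : infDist y Γ = dist y z) {c : ℝ}
    (hc : 0 ≤ c) : c • (y - z) ∈ regNormal Γ z := by
  refine ⟨hz, ?_⟩
  rintro e ⟨-, e', t, he', ht, ht0, hmem⟩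
  have hquot : ∀ k, ⟪e' k, y - z⟫ ≤ t k * ‖e' k‖ ^ 2 / 2 := fun k => by
    have hdist : ‖y - z‖ ≤ ‖y - z - t k • e' k‖ := by
      rw [sub_sub, ← dist_eq_norm, ← dist_eq_norm, ← hyz]
      exact infDist_le_dist_of_mem (hmem k)
    have hsq : ‖y - z‖ ^ 2 ≤ ‖y - z - t k • e' k‖ ^ 2 := by gcongr
    rw [norm_sub_sq_real (y - z), real_inner_smul_right, norm_smul, Real.norm_of_nonneg (ht k).le,
      real_inner_comm] at hsq
    refine le_of_mul_le_mul_left ?_ (ht k)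
    linarith
  have hlim : ⟪e, y - z⟫ ≤ 0 * ‖e‖ ^ 2 / 2 :=
    le_of_tendsto_of_tendsto' (he'.inner tendsto_const_nhds)
      ((ht0.mul (he'.norm.pow 2)).div_const 2) hquot
  rw [real_inner_smul_right]
  exact mul_nonpos_of_nonneg_of_nonpos hc (by linarith)

lemma frequently_infDist_le_of_mem_tanCone {X Y : Type*} [NormedAddCommGroup X] [NormedSpace ℝ X]
    [NormedAddCommGroup Y] [InnerProductSpace ℝ Y] {F : X → Y} {Γ : Set Y} {x d : X} {v : Y}
    (hv : HasDirDerivAt F v x d) (hvT : v ∈ tanCone Γ (F x)) {θ : ℝ} (hθ : 0 < θ) :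
    ∃ᶠ t in 𝓝[>] (0 : ℝ), infDist (F (x + t • d)) Γ ≤ θ * t := by
  obtain ⟨-, v', t, hv', ht, ht0, hmem⟩ := hvT
  have ht0' : Tendsto t atTop (𝓝[>] 0) := tendsto_nhdsWithin_iff.2 ⟨ht0, .of_forall ht⟩
  have hdiff : Tendsto (fun k => ‖(t k)⁻¹ • (F (x + t k • d) - F x) - v' k‖) atTop (𝓝 0) := by
    simpa using ((Tendsto.comp hv ht0').sub hv').norm
  refine ht0'.frequently (Eventually.frequently ?_)
  filter_upwards [hdiff.eventually_lt_const hθ] with k hk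
  calc infDist (F (x + t k • d)) Γ ≤ ‖F (x + t k • d) - (F x + t k • v' k)‖ :=
        (infDist_le_dist_of_mem (hmem k)).trans_eq (dist_eq_norm _ _)
    _ = ‖t k • ((t k)⁻¹ • (F (x + t k • d) - F x) - v' k)‖ := by
        rw [smul_sub, smul_inv_smul₀ (ht k).ne', sub_sub]
    _ = ‖(t k)⁻¹ • (F (x + t k • d) - F x) - v' k‖ * t k := by
        rw [norm_smul, Real.norm_of_nonneg (ht k).le, mul_comm]
    _ ≤ θ * t k := mul_le_mul_of_nonneg_right hk.le (ht k).le

variable {X : Type*} [NormedAddCommGroup X] [InnerProductSpace ℝ X] {S : Set X} {x η : X}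

lemma eventually_inner_neg_gradient_le [CompleteSpace X] {f : X → ℝ} {g : X}
    (hf : HasGradientAt f g x) (hmin : IsLocalMinOn f S x) {θ : ℝ} (hθ : 0 < θ) :
    ∀ᶠ q in 𝓝[S] x, ⟪-g, q - x⟫ ≤ θ * ‖q - x‖ := by
  have hsmall := (hasGradientAt_iff_isLittleO.1 hf).def hθ
  filter_upwards [hmin, hsmall.filter_mono nhdsWithin_le_nhds] with q hq hqθ
  have := (le_abs_self _).trans hqθ
  rw [inner_neg_left]
  linarith

lemma eventually_inner_le_infDist (hx : x ∈ S)
    (h : ∀ θ > 0, ∀ᶠ q in 𝓝[S] x, ⟪η, q - x⟫ ≤ θ * ‖q - x‖) {θ : ℝ} (hθ : 0 < θ) :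
    ∀ᶠ y in 𝓝 x, ⟪η, y - x⟫ ≤ ‖η‖ * infDist y S + θ * ‖y - x‖ := by
  obtain ⟨σ, hσ, hσ1, hσθ⟩ : ∃ σ > 0, σ ≤ 1 ∧ (‖η‖ + 3) * σ ≤ θ := by
    refine ⟨min 1 (θ / (‖η‖ + 3)), by positivity, min_le_left _ _, ?_⟩
    rw [mul_comm, ← le_div_iff₀ (by positivity)]
    exact min_le_right _ _
  obtain ⟨ρ, hρ, hball⟩ := Metric.mem_nhdsWithin_iff.1 (h σ hσ)
  have hnear : ∀ᶠ y in 𝓝 x, 3 * ‖y - x‖ < ρ :=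
    ContinuousAt.eventually_lt (by fun_prop) continuousAt_const (by simpa)
  filter_upwards [hnear] with y hyρ
  rcases eq_or_ne y x with rfl | hyx
  · simpa using mul_nonneg (norm_nonneg η) infDist_nonneg
  have hpos : 0 < ‖y - x‖ := norm_pos_iff.2 (sub_ne_zero.2 hyx)
  have hlt : infDist y S < infDist y S + σ * ‖y - x‖ := lt_add_of_pos_right _ (mul_pos hσ hpos)
  obtain ⟨q, hqS, hyq⟩ := (infDist_lt_iff ⟨x, hx⟩).1 hlt
  rw [dist_eq_norm] at hyq
  have hqx : ‖q - x‖ ≤ 3 * ‖y - x‖ := by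
    have htri : ‖q - x‖ ≤ ‖y - q‖ + ‖y - x‖ := by
      rw [norm_sub_rev y q]
      exact norm_sub_le_norm_sub_add_norm_sub q y x
    have hinf : infDist y S ≤ ‖y - x‖ := dist_eq_norm y x ▸ infDist_le_dist_of_mem hx
    nlinarith
  calc ⟪η, y - x⟫ = ⟪η, y - q⟫ + ⟪η, q - x⟫ := by rw [← inner_add_right, sub_add_sub_cancel]
    _ ≤ ‖η‖ * (infDist y S + σ * ‖y - x‖) + σ * (3 * ‖y - x‖) := by
        gcongr
        · exact (real_inner_le_norm _ _).trans (by gcongr)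
        · exact (hball ⟨mem_ball_iff_norm.2 (hqx.trans_lt hyρ), hqS⟩).trans (by gcongr)
    _ = ‖η‖ * infDist y S + (‖η‖ + 3) * σ * ‖y - x‖ := by ring
    _ ≤ ‖η‖ * infDist y S + θ * ‖y - x‖ := by gcongr

lemma IsMetricSubregularInDir.exists_inner_le_infDist {Y : Type*} [PseudoMetricSpace Y]
    {F : X → Y} {Γ : Set Y} {d : X} (hreg : IsMetricSubregularInDir F Γ x d) (hx : F x ∈ Γ)
    (h : ∀ θ > 0, ∀ᶠ q in 𝓝[F ⁻¹' Γ] x, ⟪η, q - x⟫ ≤ θ * ‖q - x‖) :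
    ∃ C ≥ 0, ∃ r > 0, ∀ θ > 0, ∀ᶠ t in 𝓝[>] (0 : ℝ), ∀ y ∈ closedBall (x + t • d) (r * t),
      ⟪η, y - x⟫ ≤ C * infDist (F y) Γ + θ * t := by
  obtain ⟨κ, hκ, hreg⟩ := hreg
  obtain ⟨r, hr, hball⟩ := exists_forall_mem_closedBall_of_nhdsGT_prod
    (P := fun y => infDist y (F ⁻¹' Γ) ≤ κ * infDist (F y) Γ) hreg
  refine ⟨‖η‖ * κ, by positivity, r, hr, fun θ hθ => ?_⟩
  have hθ' : 0 < θ / (‖d‖ + r) := by positivity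
  filter_upwards [hball, self_mem_nhdsWithin,
    eventually_forall_mem_closedBall_of_nhds
      (eventually_inner_le_infDist (S := F ⁻¹' Γ) hx h hθ') d r]
    with t htκ ht htη y hy
  have hyx := norm_sub_le_of_mem_closedBall_add_smul (le_of_lt ht) hy
  calc ⟪η, y - x⟫ ≤ ‖η‖ * infDist y (F ⁻¹' Γ) + θ / (‖d‖ + r) * ‖y - x‖ := htη y hy
    _ ≤ ‖η‖ * (κ * infDist (F y) Γ) + θ / (‖d‖ + r) * ((‖d‖ + r) * t) := by
        gcongr
        exact htκ y hy
    _ = ‖η‖ * κ * infDist (F y) Γ + θ * t := by field_simp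

end NormalEstimates

section Penalty

lemma le_and_le_of_sq_add_le {C t s a : ℝ} (hC : 0 ≤ C) (ht : 0 ≤ t) (ha : 0 ≤ a)
    (h : s ^ 2 + a ≤ C * s * t + t ^ 2) : s ≤ (C + 1) * t ∧ a ≤ ((C + 1) * t) ^ 2 := by
  have hs : s ≤ (C + 1) * t := by
    by_contra! hlt
    have hts : t < s := by nlinarith
    nlinarith
  refine ⟨hs, ?_⟩
  have hCs : C * t * s ≤ C * t * ((C + 1) * t) := by gcongr
  nlinarith [sq_nonneg s, mul_nonneg hC (sq_nonneg t)]

/-- Quadratic penalty for minimizing `y ↦ -⟪η, y⟫` subject to `F y ∈ Γ`, localized near the point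
`x + t d`. The weights make its minimizers `y` satisfy `dist(F y, Γ) = O(t / M)` and
`‖y - (x + t d)‖ = O(t / √M)`. -/
def dirPenalty {X Y : Type*} [NormedAddCommGroup X] [InnerProductSpace ℝ X] [PseudoMetricSpace Y]
    (F : X → Y) (Γ : Set Y) (η x d : X) (M t : ℝ) (y : X) : ℝ :=
  M / t * infDist (F y) Γ ^ 2 - ⟪η, y⟫ + t⁻¹ * ‖y - (x + t • d)‖ ^ 2

lemma infDist_le_and_sq_norm_le_of_dirPenalty_le {X Y : Type*} [NormedAddCommGroup X]
    [InnerProductSpace ℝ X] [PseudoMetricSpace Y] {F : X → Y} {Γ : Set Y} {x y d η : X} {C M t : ℝ}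
    (hC : 0 ≤ C) (hM : 0 < M) (ht : 0 < t) (hηd : 0 ≤ ⟪η, d⟫)
    (hΓ : infDist (F (x + t • d)) Γ ≤ (2 * M)⁻¹ * t)
    (hη : ⟪η, y - x⟫ ≤ C * infDist (F y) Γ + (2 * M)⁻¹ * t)
    (hle : dirPenalty F Γ η x d M t y ≤ dirPenalty F Γ η x d M t (x + t • d)) :
    M * infDist (F y) Γ ≤ (C + 1) * t ∧ M * ‖y - (x + t • d)‖ ^ 2 ≤ ((C + 1) * t) ^ 2 := by
  have hcenter : M / t * infDist (F (x + t • d)) Γ ^ 2 ≤ M / t * ((2 * M)⁻¹ * t) ^ 2 := by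
    gcongr
    exact infDist_nonneg
  have hle' : M / t * infDist (F y) Γ ^ 2 + t⁻¹ * ‖y - (x + t • d)‖ ^ 2 ≤
      M / t * ((2 * M)⁻¹ * t) ^ 2 + (C * infDist (F y) Γ + (2 * M)⁻¹ * t) := by
    have := mul_nonneg ht.le hηd
    rw [inner_sub_right] at hη
    rw [dirPenalty, dirPenalty, sub_self, norm_zero, inner_add_right,
      real_inner_smul_right] at hle
    linarith
  have hscaled := mul_le_mul_of_nonneg_left hle' (mul_pos hM ht).le
  refine le_and_le_of_sq_add_le hC ht.le (by positivity) ?_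
  field_simp at hscaled
  nlinarith [sq_nonneg t]

lemma exists_isLocalMin_dirPenalty {X Y : Type*} [NormedAddCommGroup X] [InnerProductSpace ℝ X]
    [ProperSpace X] [PseudoMetricSpace Y] {F : X → Y} {Γ : Set Y} {x d η : X} {C M r t : ℝ}
    (hC : 0 ≤ C) (hM : 0 < M) (hr : 0 < r) (hMr : (C + 1) ^ 2 < M * r ^ 2) (ht : 0 < t)
    (hF : ContinuousOn F (closedBall (x + t • d) (r * t))) (hηd : 0 ≤ ⟪η, d⟫)
    (hΓ : infDist (F (x + t • d)) Γ ≤ (2 * M)⁻¹ * t)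
    (hη : ∀ y ∈ closedBall (x + t • d) (r * t),
      ⟪η, y - x⟫ ≤ C * infDist (F y) Γ + (2 * M)⁻¹ * t) :
    ∃ y ∈ closedBall (x + t • d) (r * t),
      IsLocalMin (dirPenalty F Γ η x d M t) y ∧ M * infDist (F y) Γ ≤ (C + 1) * t ∧
      M * ‖y - (x + t • d)‖ ^ 2 ≤ ((C + 1) * t) ^ 2 := by
  have hcont : ContinuousOn (dirPenalty F Γ η x d M t) (closedBall (x + t • d) (r * t)) := by
    have : ContinuousOn (fun y => infDist (F y) Γ) (closedBall (x + t • d) (r * t)) :=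
      (continuous_infDist_pt Γ).comp_continuousOn hF
    unfold dirPenalty
    fun_prop
  have hcenter : x + t • d ∈ closedBall (x + t • d) (r * t) :=
    mem_closedBall_self (by positivity)
  obtain ⟨y, hy, hmin⟩ := (isCompact_closedBall _ _).exists_isMinOn ⟨_, hcenter⟩ hcont
  obtain ⟨hdist, hnear⟩ := infDist_le_and_sq_norm_le_of_dirPenalty_le hC hM ht hηd hΓ (hη y hy)
    (hmin hcenter)
  have hint : y ∈ ball (x + t • d) (r * t) := by
    refine mem_ball_iff_norm.2 (lt_of_pow_lt_pow_left₀ 2 (by positivity) ?_)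
    refine lt_of_mul_lt_mul_left (hnear.trans_lt ?_) hM.le
    rw [mul_pow, mul_pow, ← mul_assoc]
    gcongr
  exact ⟨y, hy, hmin.isLocalMin (closedBall_mem_nhds_of_mem hint), hdist, hnear⟩

variable {X Y : Type*} [NormedAddCommGroup X] [InnerProductSpace ℝ X] [NormedAddCommGroup Y]
  [InnerProductSpace ℝ Y] {F : X → Y} {Γ : Set Y} {x d η : X} {C M r t : ℝ}

/-- Approximate M-stationarity at the point `x + t w`: the multiplier `lam` is regular normal to
`Γ` at the point `F x + t u`. The penalty parameter `M` controls how close `w` is to `d` and `u`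
to the difference quotient of `F`, while the bound on `lam` does not depend on `M`. -/
def HasApproxMultiplier (F : X → Y) (Γ : Set Y) (η x d : X) (C M t : ℝ) : Prop :=
  ∃ (w : X) (u lam : Y), M * ‖w - d‖ ^ 2 ≤ (C + 1) ^ 2 ∧
    M * ‖t⁻¹ • (F (x + t • w) - F x) - u‖ ≤ C + 1 ∧ ‖lam‖ ≤ 2 * (C + 1) ∧
    lam ∈ regNormal Γ (F x + t • u) ∧
    IsProximalSubgradient (fun y => ⟪lam, F y⟫) (η - (2 : ℝ) • (w - d)) (x + t • w)

lemma hasApproxMultiplier_of_isLocalMin_dirPenalty [ProperSpace Y] {K : NNReal} {U : Set X} {y : X}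
    (hF : LipschitzOnWith K F U) (hU : U ∈ 𝓝 y) (hΓ : IsClosed Γ) (hΓne : Γ.Nonempty)
    (hM : 0 < M) (ht : 0 < t)
    (hmin : IsLocalMin (dirPenalty F Γ η x d M t) y) (hdist : M * infDist (F y) Γ ≤ (C + 1) * t)
    (hnear : M * ‖y - (x + t • d)‖ ^ 2 ≤ ((C + 1) * t) ^ 2) :
    HasApproxMultiplier F Γ η x d C M t := by
  obtain ⟨z, hz, hyz⟩ := hΓ.exists_infDist_eq_dist hΓne (F y)
  have hpoint : x + t • t⁻¹ • (y - x) = y := by rw [smul_inv_smul₀ ht.ne', add_sub_cancel]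
  have hdir : t⁻¹ • (y - x) - d = t⁻¹ • (y - (x + t • d)) := by
    rw [← sub_sub, smul_sub _ (y - x), inv_smul_smul₀ ht.ne']
  have hprox := (isProximalSubgradient_of_isLocalMin
    (φ := fun y => M / t * infDist (F y) Γ ^ 2) hmin).inner_of_sq_infDist hF hU
      (div_pos hM ht).le hz hyz
  rw [hyz, dist_eq_norm] at hdist
  refine ⟨t⁻¹ • (y - x), t⁻¹ • (z - F x), (2 * (M / t)) • (F y - z), ?_, ?_, ?_, ?_, ?_⟩
  · rw [hdir, norm_smul, Real.norm_of_nonneg (inv_pos.2 ht).le, mul_pow, inv_pow, mul_left_comm,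
      inv_mul_le_iff₀ (by positivity), ← mul_pow, mul_comm t]
    exact hnear
  · rw [hpoint, ← smul_sub, sub_sub_sub_cancel_right, norm_smul,
      Real.norm_of_nonneg (inv_pos.2 ht).le, mul_left_comm, inv_mul_le_iff₀ ht, mul_comm t]
    exact hdist
  · rw [norm_smul, Real.norm_of_nonneg (by positivity), mul_assoc, div_mul_eq_mul_div]
    gcongr
    exact (div_le_iff₀ ht).2 hdist
  · rw [smul_inv_smul₀ ht.ne', add_sub_cancel]
    exact smul_sub_mem_regNormal hz hyz (by positivity)
  · rwa [hpoint, hdir, smul_smul]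

lemma frequently_hasApproxMultiplier [ProperSpace X] [ProperSpace Y] {v : Y} {K : NNReal}
    {U : Set X} (hF : LipschitzOnWith K F U) (hU : U ∈ 𝓝 x) (hv : HasDirDerivAt F v x d)
    (hvT : v ∈ tanCone Γ (F x)) (hΓ : IsClosed Γ) (hηd : 0 ≤ ⟪η, d⟫) (hC : 0 ≤ C) (hr : 0 < r)
    (hη : ∀ θ > 0, ∀ᶠ t in 𝓝[>] (0 : ℝ), ∀ y ∈ closedBall (x + t • d) (r * t),
      ⟪η, y - x⟫ ≤ C * infDist (F y) Γ + θ * t)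
    (hM : 0 < M) (hMr : (C + 1) ^ 2 < M * r ^ 2) :
    ∃ᶠ t in 𝓝[>] (0 : ℝ), HasApproxMultiplier F Γ η x d C M t := by
  have hθ : 0 < (2 * M)⁻¹ := by positivity
  have hUball := eventually_forall_mem_closedBall_of_nhds (eventually_mem_nhds_iff.2 hU) d r
  refine ((frequently_infDist_le_of_mem_tanCone hv hvT hθ).and_eventually
    ((hη _ hθ).and (hUball.and self_mem_nhdsWithin))).mono ?_
  rintro t ⟨htΓ, htη, htU, ht⟩
  have hcont : ContinuousOn F (closedBall (x + t • d) (r * t)) :=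
    hF.continuousOn.mono fun y hy => mem_of_mem_nhds (htU y hy)
  obtain ⟨y, hy, hmin, hdist, hnear⟩ :=
    exists_isLocalMin_dirPenalty hC hM hr hMr ht hcont hηd htΓ htη
  exact hasApproxMultiplier_of_isLocalMin_dirPenalty hF (htU y hy) hΓ ⟨F x, hvT.1⟩ hM ht hmin
    hdist hnear

lemma exists_seq_hasApproxMultiplier {R : ℝ}
    (h : ∀ M, R < M → ∃ᶠ t in 𝓝[>] (0 : ℝ), HasApproxMultiplier F Γ η x d C M t) :
    ∃ M t : ℕ → ℝ, Tendsto M atTop atTop ∧ Tendsto t atTop (𝓝 0) ∧ (∀ k, 0 < M k) ∧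
      (∀ k, 0 < t k) ∧ ∀ k, HasApproxMultiplier F Γ η x d C (M k) (t k) := by
  have hfreq : ∃ᶠ p in (atTop : Filter ℝ) ×ˢ 𝓝[>] (0 : ℝ),
      0 < p.1 ∧ 0 < p.2 ∧ HasApproxMultiplier F Γ η x d C p.1 p.2 := by
    refine (frequently_curry_iff _).2 (Eventually.frequently ?_) |>.filter_mono curry_le_prod
    filter_upwards [eventually_gt_atTop R, eventually_gt_atTop 0] with M hM hM0
    exact ((h M hM).and_eventually self_mem_nhdsWithin).mono fun t ht => ⟨hM0, ht.2, ht.1⟩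
  obtain ⟨p, hp, hmem⟩ := exists_seq_forall_of_frequently hfreq
  exact ⟨fun k => (p k).1, fun k => (p k).2, tendsto_fst.comp hp,
    (tendsto_snd.comp hp).mono_right nhdsWithin_le_nhds, fun k => (hmem k).1,
    fun k => (hmem k).2.1, fun k => (hmem k).2.2⟩

lemma exists_mem_dirLimSubdiff_of_hasApproxMultiplier [ProperSpace X] [ProperSpace Y] {v : Y}
    {K : NNReal} {U : Set X} (hF : LipschitzOnWith K F U) (hU : U ∈ 𝓝 x)
    (hv : HasHadamardDirDerivAt F v x d) (hx : F x ∈ Γ) {M t : ℕ → ℝ}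
    (hM : Tendsto M atTop atTop) (ht0 : Tendsto t atTop (𝓝 0)) (hM0 : ∀ k, 0 < M k)
    (ht : ∀ k, 0 < t k) (h : ∀ k, HasApproxMultiplier F Γ η x d C (M k) (t k)) :
    ∃ lam, η ∈ dirLimSubdiff (fun y => ⟪lam, F y⟫) x d ⟪lam, v⟫ ∧
      lam ∈ dirLimNormal Γ (F x) v := by
  choose w u lam hwd hu hlam hnormal hprox using h
  have hw : Tendsto w atTop (𝓝 d) := by
    have hsq : Tendsto (fun k => ‖w k - d‖ ^ 2) atTop (𝓝 0) :=
      squeeze_zero (fun _ => sq_nonneg _) (fun k => (le_div_iff₀' (hM0 k)).2 (hwd k))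
        (hM.const_div_atTop _)
    simpa [tendsto_iff_norm_sub_tendsto_zero, Real.sqrt_sq] using hsq.sqrt
  have hquot : Tendsto (fun k => (t k)⁻¹ • (F (x + t k • w k) - F x)) atTop (𝓝 v) :=
    Tendsto.comp hv ((tendsto_nhdsWithin_iff.2 ⟨ht0, .of_forall ht⟩).prodMk hw)
  have huv : Tendsto u atTop (𝓝 v) := by
    have herr := squeeze_zero_norm (fun k => (le_div_iff₀' (hM0 k)).2 (hu k))
      (hM.const_div_atTop _)
    simpa using hquot.sub herr
  have hξ : Tendsto (fun k => η - (2 : ℝ) • (w k - d)) atTop (𝓝 η) := by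
    simpa using ((hw.sub_const d).const_smul (2 : ℝ)).const_sub η
  obtain ⟨lam', -, s, hs, hlam'⟩ := tendsto_subseq_of_bounded isBounded_closedBall
    fun k => mem_closedBall_zero_iff.2 (hlam k)
  have hs := hs.tendsto_atTop
  exact ⟨lam', mem_dirLimSubdiff_inner_of_tendsto hF hU hv (fun k => ht (s k)) (ht0.comp hs)
      (hw.comp hs) hlam' (hξ.comp hs) fun k => hprox (s k),
    hx, u ∘ s, t ∘ s, lam ∘ s, huv.comp hs, fun k => ht (s k), ht0.comp hs, hlam',
    fun k => hnormal (s k)⟩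

end Penalty

theorem stmt8_general {X Y : Type*} [NormedAddCommGroup X] [InnerProductSpace ℝ X]
    [FiniteDimensional ℝ X] [NormedAddCommGroup Y] [InnerProductSpace ℝ Y] [FiniteDimensional ℝ Y]
    {f : X → ℝ} {g x d : X} {F : X → Y} {v : Y} {Γ : Set Y} {K : NNReal} {U : Set X}
    (hf : HasGradientAt f g x) (hF : LipschitzOnWith K F U) (hU : U ∈ 𝓝 x)
    (hv : HasDirDerivAt F v x d) (hΓ : IsClosed Γ) (hmin : IsLocalMinOn f (F ⁻¹' Γ) x)
    (hgd : ⟪g, d⟫ ≤ 0) (hvT : v ∈ tanCone Γ (F x)) (hreg : IsMetricSubregularInDir F Γ x d) :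
    ∃ lam, -g ∈ dirLimSubdiff (fun y => ⟪lam, F y⟫) x d ⟪lam, v⟫ ∧
      lam ∈ dirLimNormal Γ (F x) v := by
  have hηd : 0 ≤ ⟪-g, d⟫ := by rwa [inner_neg_left, neg_nonneg]
  obtain ⟨C, hC, r, hr, hη⟩ := hreg.exists_inner_le_infDist hvT.1
    fun θ hθ => eventually_inner_neg_gradient_le hf hmin hθ
  have hfreq : ∀ M, (C + 1) ^ 2 / r ^ 2 < M →
      ∃ᶠ t in 𝓝[>] (0 : ℝ), HasApproxMultiplier F Γ (-g) x d C M t := fun M hM =>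
    frequently_hasApproxMultiplier hF hU hv hvT hΓ hηd hC hr hη
      ((by positivity : 0 ≤ (C + 1) ^ 2 / r ^ 2).trans_lt hM)
      ((div_lt_iff₀ (by positivity)).1 hM)
  obtain ⟨M, t, hM, ht0, hM0, ht, happrox⟩ := exists_seq_hasApproxMultiplier hfreq
  exact exists_mem_dirLimSubdiff_of_hasApproxMultiplier hF hU
    (hv.hasHadamardDirDerivAt hF hU) hvT.1 hM ht0 hM0 ht happrox

/-- A local minimizer is M-stationary in a critical unit direction `d`
provided MSCQ(d) holds there. -/
theorem stmt8 {n l : ℕ}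
    (f : Eu n → ℝ) (hf : ContDiff ℝ 1 f)
    (F : Eu n → Eu l) (F' : Eu n → Eu n → Eu l)
    (hLip : LocallyLipschitz F) (hF' : IsDirDeriv F F')
    (Γ : Set (Eu l)) (hΓne : Γ.Nonempty) (hΓcl : IsClosed Γ)
    (x : Eu n) (hfeas : F x ∈ Γ) (hmin : IsLocalMinOn f (F ⁻¹' Γ) x)
    (d : Eu n) (hd : d ∈ critCone f F F' Γ x) (hd1 : ‖d‖ = 1)
    (hMSCQ : MSCQdir F Γ x d) :
    MStatDir f F F' Γ x d := by
  obtain ⟨K, U, hU, hK⟩ := hLip x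
  exact stmt8_general (hf.differentiable one_ne_zero x).hasGradientAt hK hU (hF' x d) hΓcl hmin
    hd.1 hd.2 hMSCQ.isMetricSubregularInDir

end
end

section
/- Let x̄ be a local minimizer of (P) and let d ∈ Ĉ(x̄) ∩ 𝕊 be chosen arbitrarily. Then there exists an AM-stationary sequence {(x^k, λ^k, δ^k, ε^k)} w.r.t. x̄ in direction d such that ‖δ^k‖ ‖λ^k‖ / ‖x^k − x̄‖ → 0. If, additionally, MSCQ(d) holds at x̄, then such a sequence exists for which moreover {λ^k} is bounded. -/
open Filter Topology Metric Set
open scoped RealInnerProductSpace Pointwise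

noncomputable section

/-!
Along a tangent direction `d` there are feasible points `z ≈ x + t • d` with
`f z < f x + t * σ ^ 2`, because `⟪∇f(x), d⟫ ≤ 0`. Minimize
`f + (1 / t) * ‖· - z‖ ^ 2 + (m / 2) * dist(F ·, Γ) ^ 2` over a small ball around `x`. For large
`m` the value of `f` at a minimizer `u` cannot drop much below `f x`, so both penalty terms are at
most `t * σ ^ 2` at `u`; hence `‖u - z‖` and `dist(F u, Γ)` are `O(t * σ)`, which is small relative
to `‖u - x‖ ≈ t`. Fermat's rule at `u`, with `δ = F u - p` for a projection `p` of `F u` onto `Γ`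
and `λ = m • δ`, is approximate M-stationarity. Under metric subregularity, comparing `u` with the
nearest feasible point bounds `m * dist(F u, Γ) = ‖λ‖`.
-/

section Normals

variable {H : Type*} [NormedAddCommGroup H] [InnerProductSpace ℝ H]

theorem regNormal_subset_limNormal (Ω : Set H) (x : H) : regNormal Ω x ⊆ limNormal Ω x :=
  fun η hη => ⟨hη.1, fun _ => x, fun _ => η, tendsto_const_nhds, tendsto_const_nhds, fun _ => hη⟩

theorem smul_sub_mem_regNormal_s13 {Ω : Set H} {p y : H} {m : ℝ} (hp : p ∈ Ω)
    (hyp : infDist y Ω = dist y p) (hm : 0 ≤ m) : m • (y - p) ∈ regNormal Ω p := by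
  refine ⟨hp, ?_⟩
  rintro v ⟨_, dk, tk, hdk, htk, htk0, hmem⟩
  rw [inner_smul_right]
  refine mul_nonpos_of_nonneg_of_nonpos hm ?_
  have hquot : ∀ k, 2 * ⟪dk k, y - p⟫ ≤ tk k * ‖dk k‖ ^ 2 := fun k => by
    have hdist : ‖y - p‖ ≤ ‖(y - p) - tk k • dk k‖ := by
      rw [sub_sub, ← dist_eq_norm, ← dist_eq_norm, ← hyp]
      exact infDist_le_dist_of_mem (hmem k)
    have hsq := pow_le_pow_left₀ (norm_nonneg _) hdist 2
    rw [norm_sub_sq_real (y - p), inner_smul_right, norm_smul, mul_pow, Real.norm_eq_abs, sq_abs,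
      real_inner_comm] at hsq
    refine le_of_mul_le_mul_left ?_ (htk k)
    linarith
  have hlim : 2 * ⟪v, y - p⟫ ≤ 0 * ‖v‖ ^ 2 :=
    le_of_tendsto_of_tendsto' ((hdk.inner tendsto_const_nhds).const_mul 2)
      (htk0.mul (hdk.norm.pow 2)) hquot
  linarith

end Normals

section FirstOrder

variable {H : Type*} [NormedAddCommGroup H] [InnerProductSpace ℝ H] [CompleteSpace H]

theorem tendsto_inv_mul_sub_of_hasGradientAt {G : H → ℝ} {g u v : H} (hG : HasGradientAt G g u)
    {dk : ℕ → H} {tk : ℕ → ℝ} (hdk : Tendsto dk atTop (𝓝 v)) (htk : ∀ k, 0 < tk k)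
    (htk0 : Tendsto tk atTop (𝓝 0)) :
    Tendsto (fun k => (tk k)⁻¹ * (G (u + tk k • dk k) - G u)) atTop (𝓝 ⟪g, v⟫) := by
  have hstep : Tendsto (fun k => tk k • dk k) atTop (𝓝 0) := by simpa using htk0.smul hdk
  have hdir : Tendsto (fun k => (tk k)⁻¹ • tk k • dk k) atTop (𝓝 v) :=
    hdk.congr fun k => (inv_smul_smul₀ (htk k).ne' _).symm
  simpa using (hG.hasFDerivAt.hasFDerivWithinAt (s := univ)).lim hstep (by simp) hdir

theorem exists_mem_lt_of_mem_tanCone {X : Set H} {f : H → ℝ} {g x d : H} {a ρ σ : ℝ}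
    (hf : HasGradientAt f g x) (hd : d ∈ tanCone X x) (ha : ⟪g, d⟫ < a) (hρ : 0 < ρ)
    (hσ : 0 < σ) :
    ∃ t z, 0 < t ∧ t ≤ ρ ∧ z ∈ X ∧ ‖z - x - t • d‖ ≤ t * σ ∧ f z < f x + t * a := by
  obtain ⟨_, dk, tk, hdk, htk, htk0, hmem⟩ := hd
  have hquot := tendsto_inv_mul_sub_of_hasGradientAt hf hdk htk htk0
  obtain ⟨k, hkρ, hkσ, hka⟩ := ((htk0.eventually_le_const hρ).and
    (((tendsto_iff_norm_sub_tendsto_zero.1 hdk).eventually_le_const hσ).and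
      (hquot.eventually_lt_const ha))).exists
  refine ⟨tk k, x + tk k • dk k, htk k, hkρ, hmem k, ?_, ?_⟩
  · rw [add_sub_cancel_left, ← smul_sub, norm_smul, Real.norm_of_nonneg (htk k).le]
    exact mul_le_mul_of_nonneg_left hkσ (htk k).le
  · rw [inv_mul_lt_iff₀ (htk k)] at hka
    linarith

theorem neg_mem_limSubdiff_of_isLocalMin_add {G φ : H → ℝ} {g u : H} (hG : HasGradientAt G g u)
    (hmin : IsLocalMin (fun v => G v + φ v) u) : -g ∈ limSubdiff φ u := by
  apply regNormal_subset_limNormal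
  refine ⟨by simp [epigraphSet, pl2], ?_⟩
  rintro w ⟨_, dk, tk, hdk, htk, htk0, hmem⟩
  have hfst : Tendsto (fun k => (dk k).fst) atTop (𝓝 w.fst) :=
    ((WithLp.prod_continuous_ofLp 2 _ _).fst.tendsto w).comp hdk
  have hsnd : Tendsto (fun k => (dk k).snd) atTop (𝓝 w.snd) :=
    ((WithLp.prod_continuous_ofLp 2 _ _).snd.tendsto w).comp hdk
  have hbase : Tendsto (fun k => u + tk k • (dk k).fst) atTop (𝓝 u) := by
    simpa using (htk0.smul hfst).const_add u
  have hle : ∀ᶠ k in atTop,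
      -((tk k)⁻¹ * (G (u + tk k • (dk k).fst) - G u)) ≤ (dk k).snd := by
    filter_upwards [hbase.eventually hmin] with k hk
    have hepi : φ (u + tk k • (dk k).fst) ≤ φ u + tk k * (dk k).snd := by
      simpa [epigraphSet, pl2] using hmem k
    rw [← mul_neg, inv_mul_le_iff₀ (htk k)]
    linarith
  have hlim : -⟪g, w.fst⟫ ≤ w.snd := le_of_tendsto_of_tendsto
    (tendsto_inv_mul_sub_of_hasGradientAt hG hfst htk htk0).neg hsnd hle
  have hinner : ⟪w, pl2 (-g) (-1)⟫ = -⟪g, w.fst⟫ - w.snd := by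
    rw [WithLp.prod_inner_apply]
    simp [pl2, real_inner_comm, sub_eq_add_neg]
  linarith

end FirstOrder

section SquaredIncrement

variable {E G : Type*} [NormedAddCommGroup E] [NormedAddCommGroup G]

theorem isBigO_sub_of_locallyLipschitz {F : E → G} (hF : LocallyLipschitz F) (u : E) :
    (fun v => F v - F u) =O[𝓝 u] fun v => v - u := by
  obtain ⟨K, t, ht, hK⟩ := hF u
  refine Asymptotics.IsBigO.of_bound K ?_
  filter_upwards [ht] with v hv
  simpa only [dist_eq_norm] using hK.dist_le_mul v hv u (mem_of_mem_nhds ht)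

theorem hasFDerivAt_norm_sub_sq_of_isBigO [NormedSpace ℝ E] {F : E → G} {u : E}
    (hF : (fun v => F v - F u) =O[𝓝 u] fun v => v - u) :
    HasFDerivAt (fun v => ‖F v - F u‖ ^ 2) (0 : E →L[ℝ] ℝ) u := by
  rw [hasFDerivAt_iff_isLittleO]
  simpa using (hF.norm_norm.pow 2).trans_isLittleO
    (Asymptotics.isLittleO_pow_sub_sub u one_lt_two)

end SquaredIncrement

theorem le_mul_of_half_mul_sq_le {t σ a w : ℝ} (ht : 0 < t) (hσ : 0 ≤ σ) (ha : 2 / t ≤ a)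
    (hw : a / 2 * w ^ 2 ≤ t * σ ^ 2) : w ≤ t * σ := by
  refine le_of_sq_le_sq ?_ (by positivity)
  have hat : 1 ≤ t * (a / 2) := by
    rw [div_le_iff₀ ht] at ha
    linarith
  calc w ^ 2 ≤ t * (a / 2) * w ^ 2 := le_mul_of_one_le_left (sq_nonneg w) hat
    _ = t * (a / 2 * w ^ 2) := by ring
    _ ≤ t * (t * σ ^ 2) := by gcongr
    _ = (t * σ) ^ 2 := by ring

/-- The objective `f` penalized both for the distance to a reference point `z` and for violating
the constraint `F v ∈ Γ`. Its minimizers approximate solutions of the constrained problem. -/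
def penalty {E G : Type*} [NormedAddCommGroup E] [PseudoMetricSpace G] (f : E → ℝ) (F : E → G)
    (Γ : Set G) (z : E) (c m : ℝ) (v : E) : ℝ :=
  f v + c / 2 * ‖v - z‖ ^ 2 + m / 2 * infDist (F v) Γ ^ 2

namespace penalty

section Minimizers

variable {E G : Type*} [NormedAddCommGroup E] [PseudoMetricSpace G]
  {f : E → ℝ} {F : E → G} {Γ : Set G} {K : Set E} {u v z : E} {b c m L κ : ℝ}

theorem apply_of_mem (hv : F v ∈ Γ) : penalty f F Γ z c m v = f v + c / 2 * ‖v - z‖ ^ 2 := by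
  simp [penalty, infDist_zero_of_mem hv]

theorem continuous (hf : Continuous f) (hF : Continuous F) :
    Continuous (penalty f F Γ z c m) :=
  (hf.add (by fun_prop)).add
    ((((continuous_infDist_pt Γ).comp hF).pow 2).const_mul (m / 2))

theorem quadratic_terms_le_of_isMinOn (hu : IsMinOn (penalty f F Γ z c m) K u) (hz : z ∈ K)
    (hzΓ : F z ∈ Γ) : c / 2 * ‖u - z‖ ^ 2 + m / 2 * infDist (F u) Γ ^ 2 ≤ f z - f u := by
  have huz : penalty f F Γ z c m u ≤ penalty f F Γ z c m z := hu hz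
  rw [apply_of_mem hzΓ, sub_self, norm_zero] at huz
  unfold penalty at huz
  linarith

theorem eventually_forall_lt_of_isMinOn (hK : IsCompact K) (hf : Continuous f)
    (hF : Continuous F) (hΓ : IsClosed Γ) (hz : z ∈ K) (hzΓ : F z ∈ Γ) (hc : 0 ≤ c)
    (hb : ∀ y ∈ K, F y ∈ Γ → b < f y) :
    ∀ᶠ m in atTop, ∀ u ∈ K, IsMinOn (penalty f F Γ z c m) K u → b < f u := by
  have hsublevel : ∀ y ∈ K ∩ {y | f y ≤ b}, 0 < infDist (F y) Γ := fun y hy =>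
    (hΓ.notMem_iff_infDist_pos ⟨_, hzΓ⟩).1 fun hyΓ => (hb y hy.1 hyΓ).not_ge hy.2
  obtain ⟨α, hα, hαle⟩ := (hK.inter_right (isClosed_le hf continuous_const)).exists_forall_le'
    ((continuous_infDist_pt Γ).comp hF).continuousOn hsublevel
  obtain ⟨B, hB⟩ := hK.bddBelow_image hf.continuousOn
  have hlarge : ∀ᶠ m in atTop, f z - B < m * (α ^ 2 / 2) :=
    (tendsto_id.atTop_mul_const (by positivity)).eventually_gt_atTop _
  filter_upwards [hlarge, eventually_ge_atTop 0] with m hm hm0 u hu humin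
  by_contra! hub
  have hquad := quadratic_terms_le_of_isMinOn humin hz hzΓ
  have hBu : B ≤ f u := hB ⟨u, hu, rfl⟩
  have hαu : m / 2 * α ^ 2 ≤ m / 2 * infDist (F u) Γ ^ 2 := by
    gcongr
    exact hαle u ⟨hu, hub⟩
  have hcu : 0 ≤ c / 2 * ‖u - z‖ ^ 2 := by positivity
  linarith

theorem exists_isMinOn_lt (hK : IsCompact K) (hf : Continuous f) (hF : Continuous F)
    (hΓ : IsClosed Γ) (hz : z ∈ K) (hzΓ : F z ∈ Γ) (hc : 0 ≤ c)
    (hb : ∀ y ∈ K, F y ∈ Γ → b < f y) (M : ℝ) :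
    ∃ m u, M ≤ m ∧ u ∈ K ∧ IsMinOn (penalty f F Γ z c m) K u ∧ b < f u := by
  obtain ⟨m, hlt, hm⟩ := ((eventually_forall_lt_of_isMinOn hK hf hF hΓ hz hzΓ hc hb).and
    (eventually_ge_atTop M)).exists
  obtain ⟨u, hu, humin⟩ := hK.exists_isMinOn ⟨z, hz⟩ (continuous hf hF).continuousOn
  exact ⟨m, u, hm, hu, humin, hlt u hu humin⟩

theorem exists_isMinOn_quadratic_terms_le [ProperSpace E] {x : E} {r t σ : ℝ}
    (hf : Continuous f) (hF : Continuous F) (hΓ : IsClosed Γ) (ht : 0 < t)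
    (hσ : 0 < σ) (hz : z ∈ closedBall x r) (hzΓ : F z ∈ Γ)
    (hmin : ∀ y ∈ closedBall x r, F y ∈ Γ → f x ≤ f y) (hfz : f z < f x + t * σ ^ 2) :
    ∃ m u, 0 < m ∧ IsMinOn (penalty f F Γ z (2 / t) m) (closedBall x r) u ∧
      ‖u - z‖ ≤ t * σ ∧ infDist (F u) Γ ≤ t * σ ∧ m * infDist (F u) Γ ^ 2 ≤ 2 * (t * σ ^ 2) := by
  obtain ⟨m, u, hm, _, humin, hfu⟩ := exists_isMinOn_lt (c := 2 / t)
    (b := f z - t * σ ^ 2) (isCompact_closedBall x r) hf hF hΓ hz hzΓ (by positivity)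
    (fun y hy hyΓ => by linarith [hmin y hy hyΓ]) (2 / t)
  have hm0 : 0 < m := lt_of_lt_of_le (by positivity) hm
  have hquad := quadratic_terms_le_of_isMinOn humin hz hzΓ
  have hu0 : 0 ≤ 2 / t / 2 * ‖u - z‖ ^ 2 := by positivity
  have hD0 : 0 ≤ m / 2 * infDist (F u) Γ ^ 2 := by positivity
  exact ⟨m, u, hm0, humin, le_mul_of_half_mul_sq_le ht hσ.le le_rfl (by linarith),
    le_mul_of_half_mul_sq_le ht hσ.le hm (by linarith), by linarith⟩

theorem mul_infDist_le_of_isMinOn (hu : IsMinOn (penalty f F Γ z c m) K u) (hv : v ∈ K)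
    (hvΓ : F v ∈ Γ) (hfL : f v - f u ≤ L * ‖v - u‖) (hvu : ‖v - u‖ ≤ κ * infDist (F u) Γ)
    (hc : 0 ≤ c) (hL : 0 ≤ L) (hκ : 0 ≤ κ) :
    m * infDist (F u) Γ ≤ 2 * κ * (L + c * ‖u - z‖ + c / 2 * (κ * infDist (F u) Γ)) := by
  have huv : penalty f F Γ z c m u ≤ penalty f F Γ z c m v := hu hv
  rw [apply_of_mem hvΓ] at huv
  unfold penalty at huv
  have hvz : c / 2 * ‖v - z‖ ^ 2 ≤ c / 2 * (‖v - u‖ + ‖u - z‖) ^ 2 := by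
    gcongr
    exact norm_sub_le_norm_sub_add_norm_sub v u z
  have hD : 0 ≤ infDist (F u) Γ := infDist_nonneg
  set D := infDist (F u) Γ
  have hquad : m / 2 * D ^ 2 ≤ κ * D * (L + c * ‖u - z‖ + c / 2 * (κ * D)) := calc
    m / 2 * D ^ 2 ≤ ‖v - u‖ * (L + c * ‖u - z‖ + c / 2 * ‖v - u‖) := by linarith
    _ ≤ κ * D * (L + c * ‖u - z‖ + c / 2 * (κ * D)) := by gcongr
  rcases hD.eq_or_lt with hD0 | hDpos
  · rw [← hD0, mul_zero]
    positivity
  · refine le_of_mul_le_mul_left ?_ hDpos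
    linarith

theorem mul_infDist_le_of_infDist_preimage_le [ProperSpace E] {x : E} {r : ℝ}
    (hu : IsMinOn (penalty f F Γ z c m) (closedBall x r) u)
    (hX : IsClosed (F ⁻¹' Γ)) (hXne : (F ⁻¹' Γ).Nonempty)
    (hfL : ∀ v ∈ closedBall x r, f v - f u ≤ L * ‖v - u‖)
    (hκu : infDist u (F ⁻¹' Γ) ≤ κ * infDist (F u) Γ)
    (hur : ‖u - x‖ + κ * infDist (F u) Γ ≤ r) (hc : 0 ≤ c) (hL : 0 ≤ L) (hκ : 0 ≤ κ) :
    m * infDist (F u) Γ ≤ 2 * κ * (L + c * ‖u - z‖ + c / 2 * (κ * infDist (F u) Γ)) := by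
  obtain ⟨v, hvΓ, huv⟩ := hX.exists_infDist_eq_dist hXne u
  rw [huv, dist_comm, dist_eq_norm] at hκu
  have hv : v ∈ closedBall x r := by
    rw [mem_closedBall, dist_eq_norm]
    linarith [norm_sub_le_norm_sub_add_norm_sub v u x]
  exact mul_infDist_le_of_isMinOn hu hv hvΓ (hfL v hv) hκu hc hL hκ

theorem mul_infDist_le_of_lipschitzOnWith [ProperSpace E] {x : E} {r t : ℝ} {L : NNReal}
    (hu : IsMinOn (penalty f F Γ z (2 / t) m) (closedBall x r) u)
    (hX : IsClosed (F ⁻¹' Γ)) (hXne : (F ⁻¹' Γ).Nonempty)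
    (hfL : LipschitzOnWith L f (closedBall x r)) (hux : u ∈ closedBall x r) (ht : 0 < t)
    (huz : ‖u - z‖ ≤ t) (hD : infDist (F u) Γ ≤ t) (hκ : 0 ≤ κ)
    (hκu : infDist u (F ⁻¹' Γ) ≤ κ * infDist (F u) Γ)
    (hur : ‖u - x‖ + κ * infDist (F u) Γ ≤ r) :
    m * infDist (F u) Γ ≤ 2 * κ * (L + 2 + κ) := by
  have huz2 : 2 / t * ‖u - z‖ ≤ 2 := calc
    2 / t * ‖u - z‖ ≤ 2 / t * t := by gcongr
    _ = 2 := div_mul_cancel₀ 2 ht.ne'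
  have hκD : 2 / t / 2 * (κ * infDist (F u) Γ) ≤ κ := calc
    2 / t / 2 * (κ * infDist (F u) Γ) ≤ 2 / t / 2 * (κ * t) := by gcongr
    _ = κ := by field_simp
  refine (mul_infDist_le_of_infDist_preimage_le hu hX hXne
    (fun v hv => (Real.le_norm_self _).trans (hfL.norm_sub_le hv hux)) hκu hur (by positivity)
    L.coe_nonneg hκ).trans ?_
  gcongr

end Minimizers

section Stationarity

variable {E G : Type*} [NormedAddCommGroup E] [InnerProductSpace ℝ E] [CompleteSpace E]
  [NormedAddCommGroup G]
  {f : E → ℝ} {F : E → G} {Γ : Set G} {u z : E} {p : G} {c m : ℝ}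

theorem hasGradientAt_smooth_part (hf : DifferentiableAt ℝ f u)
    (hF : (fun v => F v - F u) =O[𝓝 u] fun v => v - u) :
    HasGradientAt (fun v => f v + c / 2 * ‖v - z‖ ^ 2 + m / 2 * ‖F v - F u‖ ^ 2)
      (gradient f u + c • (u - z)) u := by
  have hnorm : HasFDerivAt (fun v => ‖v - z‖ ^ 2) (2 • innerSL ℝ (u - z)) u := by
    simpa using ((hasFDerivAt_id u).sub_const z).norm_sq
  have hdual : (InnerProductSpace.toDual ℝ E) (gradient f u + c • (u - z)) =
      (InnerProductSpace.toDual ℝ E) (gradient f u) + (c / 2) • 2 • innerSL ℝ (u - z) +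
        (m / 2) • (0 : E →L[ℝ] ℝ) := by
    ext v
    simp
    ring
  rw [hasGradientAt_iff_hasFDerivAt, hdual]
  exact (hf.hasGradientAt.hasFDerivAt.add (hnorm.const_mul (c / 2))).add
    ((hasFDerivAt_norm_sub_sq_of_isBigO hF).const_mul (m / 2))

variable [InnerProductSpace ℝ G]

theorem neg_smul_sub_gradient_mem_limSubdiff (hf : DifferentiableAt ℝ f u)
    (hF : (fun v => F v - F u) =O[𝓝 u] fun v => v - u) (hm : 0 ≤ m) (hp : p ∈ Γ)
    (hup : infDist (F u) Γ = dist (F u) p) (hu : IsLocalMin (penalty f F Γ z c m) u) :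
    -(c • (u - z)) - gradient f u ∈ limSubdiff (fun y => ⟪m • (F u - p), F y⟫) u := by
  have hmin : IsLocalMin (fun v => (f v + c / 2 * ‖v - z‖ ^ 2 + m / 2 * ‖F v - F u‖ ^ 2) +
      ⟪m • (F u - p), F v⟫) u := by
    filter_upwards [hu] with v hv
    have hdist : infDist (F v) Γ ^ 2 ≤ ‖(F u - p) + (F v - F u)‖ ^ 2 := by
      rw [add_comm, sub_add_sub_cancel, ← dist_eq_norm]
      exact pow_le_pow_left₀ infDist_nonneg (infDist_le_dist_of_mem hp) 2
    rw [norm_add_sq_real, inner_sub_right] at hdist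
    have hscaled := mul_le_mul_of_nonneg_left hdist (by positivity : 0 ≤ m / 2)
    simp only [penalty, hup, dist_eq_norm] at hv
    simp only [real_inner_smul_left, sub_self, norm_zero]
    linarith
  rw [neg_sub_left]
  exact neg_mem_limSubdiff_of_isLocalMin_add (hasGradientAt_smooth_part hf hF) hmin

end Stationarity

end penalty

section UnitDirection

variable {E : Type*} [NormedAddCommGroup E] [NormedSpace ℝ E] {w d : E} {t : ℝ}

theorem abs_norm_sub_le_norm_sub_smul (ht : 0 ≤ t) (hd : ‖d‖ = 1) :
    |‖w‖ - t| ≤ ‖w - t • d‖ := by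
  simpa only [norm_smul, hd, mul_one, Real.norm_of_nonneg ht] using abs_norm_sub_norm_le w (t • d)

theorem norm_sub_norm_smul_le (ht : 0 ≤ t) (hd : ‖d‖ = 1) :
    ‖w - ‖w‖ • d‖ ≤ 2 * ‖w - t • d‖ := by
  have hnorm : ‖(t - ‖w‖) • d‖ ≤ ‖w - t • d‖ := by
    rw [norm_smul, hd, mul_one, Real.norm_eq_abs, abs_sub_comm]
    exact abs_norm_sub_le_norm_sub_smul ht hd
  calc ‖w - ‖w‖ • d‖ = ‖(w - t • d) + (t - ‖w‖) • d‖ := by rw [sub_smul, sub_add_sub_cancel]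
    _ ≤ 2 * ‖w - t • d‖ := by linarith [norm_add_le (w - t • d) ((t - ‖w‖) • d)]

end UnitDirection

/-- Approximate M-stationarity in direction `d` with tolerance `η`: the termwise, quantitative
content of `AMSeqDir`. The multiplier `lam` and the perturbation `δ` are exactly parallel here,
rather than only asymptotically. -/
structure IsDirApproxStationary {E G : Type*} [NormedAddCommGroup E] [InnerProductSpace ℝ E]
    [CompleteSpace E] [NormedAddCommGroup G] [InnerProductSpace ℝ G] (f : E → ℝ) (F : E → G)
    (Γ : Set G) (x d : E) (η : ℝ) (u : E) (lam δ : G) (ε : E) : Prop where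
  sub_gradient_mem : ε - gradient f u ∈ limSubdiff (fun y => ⟪lam, F y⟫) u
  mem_limNormal : lam ∈ limNormal Γ (F u - δ)
  ne : u ≠ x
  norm_sub_le : ‖u - x‖ ≤ η
  norm_sub_norm_smul_le : ‖(u - x) - ‖u - x‖ • d‖ ≤ η * ‖u - x‖
  norm_perturbation_le : ‖δ‖ ≤ η * ‖u - x‖
  norm_mul_norm_le : ‖δ‖ * ‖lam‖ ≤ η * ‖u - x‖
  norm_error_le : ‖ε‖ ≤ η
  parallel : ‖δ‖ • lam = ‖lam‖ • δ

section Existence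

variable {E G : Type*} [NormedAddCommGroup E] [InnerProductSpace ℝ E] [ProperSpace E]
  [NormedAddCommGroup G] [InnerProductSpace ℝ G] {f : E → ℝ} {F : E → G} {Γ : Set G}
  {x z d u : E} {p : G}
  {r t σ m η : ℝ}

theorem isDirApproxStationary_of_isLocalMin_penalty (hf : DifferentiableAt ℝ f u)
    (hF : LocallyLipschitz F) (hd : ‖d‖ = 1) (ht : 0 < t) (hσ : σ ≤ 1 / 4)
    (htη : t ≤ η / 8) (hση : σ ≤ η / 8) (hm : 0 ≤ m) (hzd : ‖z - x - t • d‖ ≤ t * σ)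
    (hp : p ∈ Γ) (hup : infDist (F u) Γ = dist (F u) p)
    (hu : IsLocalMin (penalty f F Γ z (2 / t) m) u) (huz : ‖u - z‖ ≤ t * σ)
    (hD : infDist (F u) Γ ≤ t * σ) (hmD : m * infDist (F u) Γ ^ 2 ≤ 2 * (t * σ ^ 2)) :
    IsDirApproxStationary f F Γ x d η u (m • (F u - p)) (F u - p) (-((2 / t) • (u - z))) := by
  have hnormp : ‖F u - p‖ = infDist (F u) Γ := by rw [hup, dist_eq_norm]
  have hσ0 : 0 ≤ σ := nonneg_of_mul_nonneg_right ((norm_nonneg _).trans huz) ht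
  have hη0 : 0 ≤ η := by linarith
  have hdir : ‖u - x - t • d‖ ≤ 2 * (t * σ) := calc
    ‖u - x - t • d‖ = ‖(u - z) + (z - x - t • d)‖ := by congr 1; abel
    _ ≤ 2 * (t * σ) := by linarith [norm_add_le (u - z) (z - x - t • d)]
  have htσ : t * σ ≤ t * (1 / 4) := by gcongr
  obtain ⟨hge, hle⟩ := abs_le.1 ((abs_norm_sub_le_norm_sub_smul ht.le hd).trans hdir)
  have hlower : t ≤ 2 * ‖u - x‖ := by linarith
  have hupper : ‖u - x‖ ≤ η := by linarith
  have hscale : 4 * (t * σ) ≤ η * ‖u - x‖ := calc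
    4 * (t * σ) ≤ 4 * (2 * ‖u - x‖ * (η / 8)) := by gcongr
    _ = η * ‖u - x‖ := by ring
  have htσ0 : 0 ≤ t * σ := mul_nonneg ht.le hσ0
  have hσsq : t * σ ^ 2 ≤ t * σ := by
    gcongr
    exact pow_le_of_le_one hσ0 (by linarith) two_ne_zero
  refine
    { sub_gradient_mem := penalty.neg_smul_sub_gradient_mem_limSubdiff hf
        (isBigO_sub_of_locallyLipschitz hF u) hm hp hup hu
      mem_limNormal := ?_
      ne := sub_ne_zero.1 (norm_pos_iff.1 (by linarith))
      norm_sub_le := hupper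
      norm_sub_norm_smul_le := by linarith [norm_sub_norm_smul_le (w := u - x) ht.le hd]
      norm_perturbation_le := by linarith [htσ0]
      norm_mul_norm_le := ?_
      norm_error_le := ?_
      parallel := ?_ }
  · rw [sub_sub_cancel]
    exact regNormal_subset_limNormal Γ p (smul_sub_mem_regNormal_s13 hp hup hm)
  · rw [norm_smul, Real.norm_of_nonneg hm, hnormp]
    linarith [htσ0]
  · rw [norm_neg, norm_smul, Real.norm_of_nonneg (by positivity), div_mul_eq_mul_div,
      div_le_iff₀ ht]
    calc 2 * ‖u - z‖ ≤ 2 * (t * (η / 8)) := by linarith [mul_le_mul_of_nonneg_left hση ht.le]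
      _ ≤ η * t := by linarith [mul_nonneg hη0 ht.le]
  · rw [norm_smul, Real.norm_of_nonneg hm, smul_smul, mul_comm]

theorem exists_isDirApproxStationary [ProperSpace G] {L : NNReal} (hf : Differentiable ℝ f)
    (hF : LocallyLipschitz F) (hΓ : IsClosed Γ) (hr : 0 < r)
    (hfL : LipschitzOnWith L f (closedBall x r))
    (hmin : ∀ y ∈ closedBall x r, F y ∈ Γ → f x ≤ f y) (hgrad : ⟪gradient f x, d⟫ ≤ 0)
    (hd : d ∈ tanCone (F ⁻¹' Γ) x) (hd1 : ‖d‖ = 1) (hη : 0 < η) :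
    ∃ u lam δ ε, IsDirApproxStationary f F Γ x d η u lam δ ε ∧
      ∀ κ, 0 ≤ κ → κ * η ≤ r → infDist u (F ⁻¹' Γ) ≤ κ * infDist (F u) Γ →
        ‖lam‖ ≤ 2 * κ * (L + 2 + κ) := by
  obtain ⟨σ, hσ, hσmin⟩ : ∃ σ, 0 < σ ∧ σ ≤ min (η / 8) (min (1 / 4) (r / 4)) :=
    ⟨_, by positivity, le_rfl⟩
  obtain ⟨hση, hσ4, hσr⟩ : σ ≤ η / 8 ∧ σ ≤ 1 / 4 ∧ σ ≤ r / 4 := by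
    simpa only [le_min_iff] using hσmin
  obtain ⟨t, z, ht, htσ, hzΓ, hzd, hfz⟩ := exists_mem_lt_of_mem_tanCone (a := σ ^ 2)
    (hf x).hasGradientAt hd (hgrad.trans_lt (by positivity)) hσ hσ
  have hts : t * σ ≤ σ := mul_le_of_le_one_left hσ.le (by linarith)
  have hzx : ‖z - x‖ ≤ 2 * σ := by
    linarith [le_of_abs_le ((abs_norm_sub_le_norm_sub_smul ht.le hd1).trans hzd)]
  have hz : z ∈ closedBall x r := by
    rw [mem_closedBall, dist_eq_norm]
    linarith
  obtain ⟨m, u, hm, humin, huz, hD, hmD⟩ := penalty.exists_isMinOn_quadratic_terms_le hf.continuous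
    hF.continuous hΓ ht hσ hz hzΓ hmin hfz
  have hux : ‖u - x‖ ≤ 3 * σ := by linarith [norm_sub_le_norm_sub_add_norm_sub u z x]
  have hu : u ∈ ball x r := by
    rw [mem_ball, dist_eq_norm]
    linarith
  obtain ⟨p, hp, hup⟩ := hΓ.exists_infDist_eq_dist ⟨_, hzΓ⟩ (F u)
  refine ⟨u, m • (F u - p), F u - p, _, isDirApproxStationary_of_isLocalMin_penalty (hf u) hF hd1
    ht hσ4 (htσ.trans hση) hση hm.le hzd hp hup
    (humin.isLocalMin (closedBall_mem_nhds_of_mem hu)) huz hD hmD, ?_⟩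
  intro κ hκ hκη hκu
  have hκσ : κ * σ ≤ κ * (η / 8) := by gcongr
  have hκD : κ * infDist (F u) Γ ≤ κ * σ := by
    gcongr
    exact hD.trans hts
  have htσt : t * σ ≤ t := mul_le_of_le_one_right ht.le (by linarith)
  rw [norm_smul, Real.norm_of_nonneg hm.le, ← dist_eq_norm, ← hup]
  exact penalty.mul_infDist_le_of_lipschitzOnWith humin (hΓ.preimage hF.continuous) ⟨z, hzΓ⟩ hfL
    (ball_subset_closedBall hu) ht (huz.trans htσt) (hD.trans htσt) hκ hκu (by linarith)

end Existence

section Sequences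

variable {n l : ℕ} {f : Eu n → ℝ} {F : Eu n → Eu l} {Γ : Set (Eu l)} {x d : Eu n}
  {η : ℕ → ℝ} {xk : ℕ → Eu n} {lamk δk : ℕ → Eu l} {εk : ℕ → Eu n}

theorem tendsto_norm_mul_norm_div_of_isDirApproxStationary (hη : Tendsto η atTop (𝓝 0))
    (h : ∀ k, IsDirApproxStationary f F Γ x d (η k) (xk k) (lamk k) (δk k) (εk k)) :
    Tendsto (fun k => ‖δk k‖ * ‖lamk k‖ / ‖xk k - x‖) atTop (𝓝 0) :=
  squeeze_zero (fun k => by positivity)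
    (fun k => (div_le_iff₀ (norm_sub_pos_iff.2 (h k).ne)).2 (h k).norm_mul_norm_le) hη

theorem amSeqDir_of_isDirApproxStationary (hη : Tendsto η atTop (𝓝 0))
    (h : ∀ k, IsDirApproxStationary f F Γ x d (η k) (xk k) (lamk k) (δk k) (εk k)) :
    AMSeqDir f F Γ x xk lamk δk εk d := by
  have hpos : ∀ k, 0 < ‖xk k - x‖ := fun k => norm_sub_pos_iff.2 (h k).ne
  have hx : Tendsto xk atTop (𝓝 x) := tendsto_iff_norm_sub_tendsto_zero.2
    (squeeze_zero (fun k => norm_nonneg _) (fun k => (h k).norm_sub_le) hη)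
  have hδ : Tendsto (fun k => ‖xk k - x‖⁻¹ • δk k) atTop (𝓝 0) := by
    refine squeeze_zero_norm (fun k => ?_) hη
    rw [norm_smul, norm_inv, norm_norm, inv_mul_le_iff₀ (hpos k), mul_comm]
    exact (h k).norm_perturbation_le
  have hδ0 : Tendsto δk atTop (𝓝 0) := by
    have hprod := (tendsto_iff_norm_sub_tendsto_zero.1 hx).smul hδ
    rw [zero_smul] at hprod
    exact hprod.congr fun k => smul_inv_smul₀ (hpos k).ne' _
  have hdir : Tendsto (fun k => ‖xk k - x‖⁻¹ • (xk k - x)) atTop (𝓝 d) := by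
    refine tendsto_iff_norm_sub_tendsto_zero.2
      (squeeze_zero (fun k => norm_nonneg _) (fun k => ?_) hη)
    rw [← inv_smul_smul₀ (hpos k).ne' d, ← smul_sub, norm_smul, norm_inv, norm_norm,
      inv_mul_le_iff₀ (hpos k), mul_comm]
    exact (h k).norm_sub_norm_smul_le
  have hparallel : ∀ k, ‖‖δk k‖ • lamk k - ‖lamk k‖ • δk k‖ ≤ ‖δk k‖ * ‖lamk k‖ * 0 := fun k => by
    rw [(h k).parallel, sub_self, norm_zero, mul_zero]
  obtain ⟨M, hM⟩ := (tendsto_norm_mul_norm_div_of_isDirApproxStationary hη h).bddAbove_range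
  exact ⟨⟨fun k => (h k).sub_gradient_mem, fun k => (h k).mem_limNormal, hx, hδ0,
      squeeze_zero_norm (fun k => (h k).norm_error_le) hη⟩,
    fun k => (h k).ne, hdir, hδ,
    ⟨fun _ => 0, fun _ => le_rfl, tendsto_const_nhds, hparallel⟩, M, fun k => hM ⟨k, rfl⟩⟩

theorem exists_norm_le_of_MSCQdir {r L : ℝ} (hr : 0 < r) (hd : ‖d‖ = 1)
    (hη : Tendsto η atTop (𝓝 0))
    (h : ∀ k, IsDirApproxStationary f F Γ x d (η k) (xk k) (lamk k) (δk k) (εk k))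
    (hbound : ∀ k κ, 0 ≤ κ → κ * η k ≤ r →
      infDist (xk k) (F ⁻¹' Γ) ≤ κ * infDist (F (xk k)) Γ → ‖lamk k‖ ≤ 2 * κ * (L + 2 + κ))
    (hMSCQ : MSCQdir F Γ x d) : ∃ M, ∀ k, ‖lamk k‖ ≤ M := by
  obtain ⟨ε, hε, δ, hδ, κ, hκ, hsub⟩ := hMSCQ
  have hκη : Tendsto (fun k => κ * η k) atTop (𝓝 0) := by simpa using hη.const_mul κ
  have hev : ∀ᶠ k in atTop, ‖lamk k‖ ≤ 2 * κ * (L + 2 + κ) := by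
    filter_upwards [hη.eventually_le_const hε, hη.eventually_le_const hδ,
      hκη.eventually_le_const hr] with k hkε hkδ hkr
    refine hbound k κ hκ.le hkr (hsub _ ⟨(h k).norm_sub_le.trans hkε, ?_⟩)
    rw [hd, one_smul, mul_one]
    exact (h k).norm_sub_norm_smul_le.trans (by gcongr)
  obtain ⟨M, hM⟩ := (isBoundedUnder_of_eventually_le hev).bddAbove_range
  exact ⟨M, fun k => hM ⟨k, rfl⟩⟩

end Sequences

theorem exists_closedBall_lipschitzOnWith_forall_le {E : Type*} [PseudoMetricSpace E] {f : E → ℝ}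
    {X : Set E} {x : E} (hf : LocallyLipschitz f) (hmin : IsLocalMinOn f X x) :
    ∃ r > 0, ∃ L, LipschitzOnWith L f (closedBall x r) ∧
      ∀ y ∈ closedBall x r, y ∈ X → f x ≤ f y := by
  obtain ⟨L, V, hV, hL⟩ := hf x
  obtain ⟨r, hr, hrV⟩ := nhds_basis_closedBall.mem_iff.1
    (inter_mem hV (eventually_nhdsWithin_iff.1 hmin))
  exact ⟨r, hr, L, hL.mono fun y hy => (hrV hy).1, fun y hy => (hrV hy).2⟩

theorem stmt13_general {n l : ℕ} {f : Eu n → ℝ} (hf : Differentiable ℝ f)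
    (hfLip : LocallyLipschitz f) {F : Eu n → Eu l} (hF : LocallyLipschitz F) {Γ : Set (Eu l)}
    (hΓ : IsClosed Γ) {x d : Eu n} (hmin : IsLocalMinOn f (F ⁻¹' Γ) x)
    (hd : d ∈ implCritCone f F Γ x) (hd1 : ‖d‖ = 1) :
    ∃ (xk : ℕ → Eu n) (lamk δk : ℕ → Eu l) (εk : ℕ → Eu n),
      AMSeqDir f F Γ x xk lamk δk εk d ∧
      Tendsto (fun k => ‖δk k‖ * ‖lamk k‖ / ‖xk k - x‖) atTop (𝓝 0) ∧
      (MSCQdir F Γ x d → ∃ M : ℝ, ∀ k, ‖lamk k‖ ≤ M) := by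
  obtain ⟨r, hr, L, hfL, hball⟩ := exists_closedBall_lipschitzOnWith_forall_le hfLip hmin
  choose xk lamk δk εk happrox hbound using fun k : ℕ =>
    exists_isDirApproxStationary hf hF hΓ hr hfL hball hd.1 hd.2 hd1
      (Nat.one_div_pos_of_nat (n := k))
  have hη : Tendsto (fun k : ℕ => 1 / ((k : ℝ) + 1)) atTop (𝓝 0) :=
    tendsto_one_div_add_atTop_nhds_zero_nat
  exact ⟨xk, lamk, δk, εk, amSeqDir_of_isDirApproxStationary hη happrox,
    tendsto_norm_mul_norm_div_of_isDirApproxStationary hη happrox,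
    exists_norm_le_of_MSCQdir hr hd1 hη happrox hbound⟩

/-- Existence of an AM-stationary sequence in any implicit critical unit direction at a
local minimizer, with vanishing `‖δ^k‖‖λ^k‖/‖x^k − x̄‖`, and bounded multipliers under
MSCQ(d). -/
theorem stmt13 {n l : ℕ}
    (f : Eu n → ℝ) (hf : ContDiff ℝ 1 f)
    (F : Eu n → Eu l) (F' : Eu n → Eu n → Eu l)
    (hLip : LocallyLipschitz F) (hF' : IsDirDeriv F F')
    (Γ : Set (Eu l)) (hΓne : Γ.Nonempty) (hΓcl : IsClosed Γ)
    (x : Eu n) (hfeas : F x ∈ Γ) (hmin : IsLocalMinOn f (F ⁻¹' Γ) x)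
    (d : Eu n) (hd : d ∈ implCritCone f F Γ x) (hd1 : ‖d‖ = 1) :
    ∃ (xk : ℕ → Eu n) (lamk δk : ℕ → Eu l) (εk : ℕ → Eu n),
      AMSeqDir f F Γ x xk lamk δk εk d ∧
      Tendsto (fun k => ‖δk k‖ * ‖lamk k‖ / ‖xk k - x‖) atTop (𝓝 0) ∧
      (MSCQdir F Γ x d → ∃ M : ℝ, ∀ k, ‖lamk k‖ ≤ M) := by
  exact stmt13_general (hf.differentiable one_ne_zero) hf.locallyLipschitz hLip hΓcl hmin hd hd1

end
end
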